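/- arXiv:2402.18939 — 2 statements merged into one kernel-verified Lean document; each statement's English description precedes it below -/
import Mathlib

section
/- Theorem 6: With the reduced form Q, parameters d = (8|D|)^{1/5}, m, K as in the context, suppose the reals c_1, …, c_5 satisfy c_2 ∈ ℤ, and suppose a < 1/2, d ≤ 1, a + d ≤ 1, and (m, K) = (2,1). Let a_4′ and a_5′ denote the unique representatives in (−1/2, 1/2] of a_4 − a_3h_4 and a_5 − a_3h_5 modulo 1. If it is not the case that simultaneously A = 1/3, t = 1/4, λ = 1/2, c_5 ∈ ℤ, a_5′ − a_4′/2 ∈ ℤ, and d + 6d⁵ < 2/3, then there exist x_1, …, x_5 with x_i − c_i ∈ ℤ for every i such that 0 < Q(x_1,…,x_5) < d. -/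
/-- The positive definite ternary form of the Birch reduction. -/
noncomputable def redPhi (a A t lam h₄ h₅ : ℝ) (u v w : ℝ) : ℝ :=
  a * (u + h₄*v + h₅*w)^2 + A * (v + lam*w)^2 + t * w^2

/-- The Birch-reduced indefinite quadratic form of type (1,4). -/
noncomputable def redQ (a A t lam h₄ h₅ a₂ a₃ a₄ a₅ : ℝ) (x₁ x₂ x₃ x₄ x₅ : ℝ) : ℝ :=
  (x₁ + a₂*x₂ + a₃*x₃ + a₄*x₄ + a₅*x₅) * x₂ - redPhi a A t lam h₄ h₅ x₃ x₄ x₅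

/-- The section of the problem along `x₃`: no translate hits the target interval. -/
def T6Bad (a d s B : ℝ) : Prop :=
  ∀ n : ℤ, ¬ (0 < B - a * (s + n)^2 ∧ B - a * (s + n)^2 < d)

lemma t6_near (s : ℝ) : ∃ n : ℤ, ∃ r : ℝ, s + n = r ∧ -1/2 ≤ r ∧ r ≤ 1/2 := by
  refine ⟨-round s, s - round s, by push_cast; ring, ?_, ?_⟩
  · have := abs_le.1 (abs_sub_round s); linarith [this.1]
  · have := abs_le.1 (abs_sub_round s); linarith [this.2]

lemma t6_z0 (s : ℝ) : ∃ n : ℤ, 0 ≤ (s + n)^2 ∧ (s + n)^2 ≤ 1/4 := by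
  obtain ⟨n, r, h, h1, h2⟩ := t6_near s
  refine ⟨n, by positivity, ?_⟩
  rw [h]; nlinarith

lemma t6_z1 (s : ℝ) : ∃ n : ℤ, 1/4 ≤ (s + n)^2 ∧ (s + n)^2 ≤ 1 := by
  obtain ⟨n, r, h, h1, h2⟩ := t6_near s
  rcases le_total 0 r with h0 | h0
  · refine ⟨n - 1, ?_⟩
    have : s + ((n - 1 : ℤ) : ℝ) = r - 1 := by push_cast; linarith
    rw [this]; constructor <;> nlinarith
  · refine ⟨n + 1, ?_⟩
    have : s + ((n + 1 : ℤ) : ℝ) = r + 1 := by push_cast; linarith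
    rw [this]; constructor <;> nlinarith

lemma t6_z2 (s : ℝ) : ∃ n : ℤ, 1 ≤ (s + n)^2 ∧ (s + n)^2 ≤ 9/4 := by
  obtain ⟨n, r, h, h1, h2⟩ := t6_near s
  rcases le_total 0 r with h0 | h0
  · refine ⟨n + 1, ?_⟩
    have : s + ((n + 1 : ℤ) : ℝ) = r + 1 := by push_cast; linarith
    rw [this]; constructor <;> nlinarith
  · refine ⟨n - 1, ?_⟩
    have : s + ((n - 1 : ℤ) : ℝ) = r - 1 := by push_cast; linarith
    rw [this]; constructor <;> nlinarith

lemma t6_z3 (s : ℝ) : ∃ n : ℤ, 9/4 ≤ (s + n)^2 ∧ (s + n)^2 ≤ 4 := by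
  obtain ⟨n, r, h, h1, h2⟩ := t6_near s
  rcases le_total 0 r with h0 | h0
  · refine ⟨n - 2, ?_⟩
    have : s + ((n - 2 : ℤ) : ℝ) = r - 2 := by push_cast; linarith
    rw [this]; constructor <;> nlinarith
  · refine ⟨n + 2, ?_⟩
    have : s + ((n + 2 : ℤ) : ℝ) = r + 2 := by push_cast; linarith
    rw [this]; constructor <;> nlinarith

/-- The one-dimensional covering lemma in `x₃` (for `m = 2`). -/
lemma t6_cover {a d s B : ℝ} (ha : 0 < a) (had : 2 * a < d) (hB1 : a/4 < B) (hB2 : B < d + a) :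
    ¬ T6Bad a d s B := by
  intro h
  rcases lt_or_ge B d with h1 | h1
  · obtain ⟨n, h3, h4⟩ := t6_z0 s
    exact h n ⟨by nlinarith, by nlinarith⟩
  rcases lt_or_ge B (d + a/4) with h2 | h2
  · obtain ⟨n, h3, h4⟩ := t6_z1 s
    exact h n ⟨by nlinarith, by nlinarith⟩
  · obtain ⟨n, h3, h4⟩ := t6_z2 s
    exact h n ⟨by nlinarith, by nlinarith⟩

/-- Normalisation: a value all of whose integer translates are bad lies in a short arc. -/
lemma t6_arc {a d s B : ℝ} (ha : 0 < a) (had : 2 * a < d)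
    (h : ∀ N : ℤ, T6Bad a d s (B + N)) :
    ∃ N : ℤ, d + a ≤ B - N ∧ B - N ≤ 1 + a/4 := by
  refine ⟨⌈B - a/4⌉ - 1, ?_, ?_⟩
  · by_contra hc
    push Not at hc
    have h1 := h (-(⌈B - a/4⌉ - 1))
    have h2 := Int.ceil_lt_add_one (B - a/4)
    refine t6_cover ha had ?_ ?_ h1
    · push_cast; linarith
    · push_cast at hc ⊢; linarith
  · have := Int.le_ceil (B - a/4)
    push_cast; linarith

/-- Refined upper bound for the arc. -/
lemma t6_arc' {a d s B : ℝ} (ha : 0 < a) (had : 2 * a < d) (hd : 1 < d + 2 * a)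
    (ha3 : a < 2/5)
    (h : ∀ N : ℤ, T6Bad a d s (B + N)) :
    ∃ N : ℤ, d + a ≤ B - N ∧ B - N ≤ 1 + a/36 := by
  obtain ⟨N, h1, h2⟩ := t6_arc ha had h
  refine ⟨N, h1, ?_⟩
  by_contra hc
  push Not at hc
  set b := B - N with hb
  have hN : ∀ k : ℤ, T6Bad a d s (b + k) := by
    intro k
    have := h (-N + k)
    have e : B + ((-N + k : ℤ) : ℝ) = b + k := by push_cast; rw [hb]; ring
    rwa [e] at this
  have key : ∀ r : ℝ, 0 ≤ r → r ≤ 1/2 →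
      ¬ (0 < b - 1 - a * r^2 ∧ b - 1 - a * r^2 < d) →
      ¬ (0 < b - a * (1 + r)^2 ∧ b - a * (1 + r)^2 < d) →
      ¬ (0 < b - a * (2 - r)^2 ∧ b - a * (2 - r)^2 < d) → False := by
    intro r hr0 hr1 e1 e2 e3
    have hr2 : r^2 ≤ 1/4 := by nlinarith
    have f1 : b - 1 - a * r^2 ≤ 0 := by
      by_contra hh
      push Not at hh
      exact e1 ⟨hh, by nlinarith⟩
    have f0 : 1/6 < r := by
      by_contra hh
      push Not at hh
      have : r^2 ≤ 1/36 := by nlinarith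
      nlinarith
    have f2 : d ≤ b - a * (1 + r)^2 := by
      by_contra hh
      push Not at hh
      refine e2 ⟨?_, hh⟩
      nlinarith
    apply e3
    constructor
    · nlinarith
    · nlinarith
  obtain ⟨n, r, hr, hr1, hr2⟩ := t6_near s
  have g1 : ∀ k : ℤ, ¬ (0 < b - 1 - a * (r + k)^2 ∧ b - 1 - a * (r + k)^2 < d) := by
    intro k
    have := hN (-1) (n + k)
    have e : s + ((n + k : ℤ) : ℝ) = r + k := by push_cast; linarith
    have e' : b + ((-1 : ℤ) : ℝ) = b - 1 := by push_cast; ring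
    rwa [e, e'] at this
  have g2 : ∀ k : ℤ, ¬ (0 < b - a * (r + k)^2 ∧ b - a * (r + k)^2 < d) := by
    intro k
    have := hN 0 (n + k)
    have e : s + ((n + k : ℤ) : ℝ) = r + k := by push_cast; linarith
    have e' : b + ((0 : ℤ) : ℝ) = b := by push_cast; ring
    rwa [e, e'] at this
  rcases le_total 0 r with h0 | h0
  · apply key r h0 hr2
    · have := g1 0; simpa using this
    · have := g2 1
      have e : (r + ((1:ℤ):ℝ))^2 = (1 + r)^2 := by push_cast; ring
      rwa [e] at this
    · have := g2 (-2)
      have e : (r + ((-2:ℤ):ℝ))^2 = (2 - r)^2 := by push_cast; ring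
      rwa [e] at this
  · apply key (-r) (by linarith) (by linarith)
    · have := g1 0; simpa using this
    · have := g2 (-1)
      have e : (r + ((-1:ℤ):ℝ))^2 = (1 + -r)^2 := by push_cast; ring
      rwa [e] at this
    · have := g2 2
      have e : (r + ((2:ℤ):ℝ))^2 = (2 - -r)^2 := by push_cast; ring
      rwa [e] at this

/-- Bounded sequences have no drift. -/
lemma t6_drift {E : ℤ → ℝ} {C δ : ℝ} {w : ℤ} (hE : ∀ n, -C ≤ E n ∧ E n ≤ C)
    (h : ∀ n, E (n + w) - E n = δ) : δ = 0 := by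
  have key : ∀ m : ℕ, E (m * w) = E 0 + m * δ := by
    intro m
    induction m with
    | zero => simp
    | succ k ih =>
      have := h (k * w)
      have e : ((k + 1 : ℕ) : ℤ) * w = k * w + w := by push_cast; ring
      rw [e]; push_cast; linarith
  by_contra hne
  obtain ⟨m, hm⟩ := exists_nat_gt (2 * C / |δ|)
  have hpos : 0 < |δ| := abs_pos.2 hne
  rw [div_lt_iff₀ hpos] at hm
  have h1 := key m
  have h2 := hE (m * w)
  have h3 := hE 0
  have h4 : (m : ℝ) * |δ| = |m * δ| := by rw [abs_mul, Nat.abs_cast]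
  have h5 : |(m : ℝ) * δ| ≤ 2 * C := by
    rw [abs_le]; constructor <;> linarith [h2.1, h2.2, h3.1, h3.2]
  linarith

lemma t6_int_eq {x ε : ℝ} {m n : ℤ} (hε : ε ≤ 1/2) (hx : |x + m| < ε) (hy : |x + n| < ε) :
    m = n := by
  have h1 := abs_lt.1 hx
  have h2 := abs_lt.1 hy
  have h3 : ((m - n : ℤ) : ℝ) < 1 := by push_cast; linarith [h1.1, h1.2, h2.1, h2.2]
  have h4 : ((-1 : ℤ) : ℝ) < ((m - n : ℤ) : ℝ) := by push_cast; linarith [h1.1, h1.2, h2.1, h2.2]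
  have h5 : m - n < 1 := by exact_mod_cast h3
  have h6 : -1 < m - n := by exact_mod_cast h4
  omega

/-- A sequence which is affine modulo one and stays in a short arc is constant modulo one. -/
lemma t6_lin {g : ℤ → ℝ} {lo l δ : ℝ} (hl : l < 1/2)
    (hg : ∀ n, ∃ N : ℤ, lo ≤ g n - N ∧ g n - N ≤ lo + l)
    (h : ∀ n, ∃ M : ℤ, g (n + 1) - g n = δ + M) : ∃ M : ℤ, δ = M := by
  choose N hN1 hN2 using hg
  choose M hM using h
  have hd : ∀ n, (g (n+1) - N (n+1)) - (g n - N n) = δ + ((M n - N (n+1) + N n : ℤ) : ℝ) := by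
    intro n; push_cast; linarith [hM n]
  have hab : ∀ n, |δ + ((M n - N (n+1) + N n : ℤ) : ℝ)| < 1/2 := by
    intro n
    rw [← hd n, abs_lt]
    constructor <;> linarith [hN1 n, hN2 n, hN1 (n+1), hN2 (n+1)]
  have hc : ∀ n, (M n - N (n+1) + N n) = (M 0 - N (0+1) + N 0) := fun n =>
    t6_int_eq le_rfl (hab n) (hab 0)
  have := t6_drift (E := fun n => g n - N n) (C := |lo| + |l|) (w := 1)
    (δ := δ + ((M 0 - N (0+1) + N 0 : ℤ) : ℝ))
    (fun n => by
      have a1 := abs_le.1 (le_refl |lo|)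
      have a2 := abs_le.1 (le_refl |l|)
      constructor <;> linarith [hN1 n, hN2 n, abs_nonneg lo, abs_nonneg l, a1.1, a1.2, a2.1, a2.2])
    (fun n => by rw [hd n, hc n])
  refine ⟨-(M 0 - N (0+1) + N 0), ?_⟩
  rw [Int.cast_neg]
  linarith

/-- The analogue for second differences. -/
lemma t6_quad {g : ℤ → ℝ} {lo l δ : ℝ} (hl : l < 1/4)
    (hg : ∀ n, ∃ N : ℤ, lo ≤ g n - N ∧ g n - N ≤ lo + l)
    (h : ∀ n, g (n + 1 + 1) - 2 * g (n + 1) + g n = δ) : ∃ M : ℤ, δ = M := by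
  choose N hN1 hN2 using hg
  have hd : ∀ n, ((g (n+1+1) - N (n+1+1)) - (g (n+1) - N (n+1)))
      - ((g (n+1) - N (n+1)) - (g n - N n)) =
      δ + ((-N (n+1+1) + 2 * N (n+1) - N n : ℤ) : ℝ) := by
    intro n; push_cast; linarith [h n]
  have hab : ∀ n, |δ + ((-N (n+1+1) + 2 * N (n+1) - N n : ℤ) : ℝ)| < 1/2 := by
    intro n
    rw [← hd n, abs_lt]
    constructor <;> linarith [hN1 n, hN2 n, hN1 (n+1), hN2 (n+1), hN1 (n+1+1), hN2 (n+1+1)]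
  have hc : ∀ n, (-N (n+1+1) + 2 * N (n+1) - N n) = (-N (0+1+1) + 2 * N (0+1) - N 0) := fun n =>
    t6_int_eq le_rfl (hab n) (hab 0)
  have := t6_drift (E := fun n => (g (n+1) - N (n+1)) - (g n - N n)) (C := 1) (w := 1)
    (δ := δ + ((-N (0+1+1) + 2 * N (0+1) - N 0 : ℤ) : ℝ))
    (fun n => by
      constructor <;> linarith [hN1 n, hN2 n, hN1 (n+1), hN2 (n+1)])
    (fun n => by rw [hd n, hc n])
  refine ⟨-(-N (0+1+1) + 2 * N (0+1) - N 0), ?_⟩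
  rw [Int.cast_neg]
  linarith

lemma t6_win5 {x1 x2 x3 x4 x5 : ℝ} (h1 : x1 = 0 ∨ x1 = 1) (h2 : x2 = 0 ∨ x2 = 1)
    (h3 : x3 = 0 ∨ x3 = 1) (h4 : x4 = 0 ∨ x4 = 1) (h5 : x5 = 0 ∨ x5 = 1)
    (i1 : x1 = 1 → x2 = 0) (i2 : x2 = 1 → x3 = 0) (i3 : x3 = 1 → x4 = 0)
    (i4 : x4 = 1 → x5 = 0) (t1 : x1 = 0 → x2 = 0 → x3 = 0 → False)
    (t2 : x2 = 0 → x3 = 0 → x4 = 0 → False) (t3 : x3 = 0 → x4 = 0 → x5 = 0 → False)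
    (q1 : x1 = 1 → x3 = 1 → x5 = 1 → False)
    (q2 : x1 = 0 → x2 = 0 → x3 = 1 → x4 = 0 → x5 = 0 → False) :
    x1 + x2 + x3 + x4 + x5 = 2 := by
  rcases h1 with rfl | rfl <;> rcases h2 with rfl | rfl <;> rcases h3 with rfl | rfl <;>
    rcases h4 with rfl | rfl <;> rcases h5 with rfl | rfl <;>
    first | (norm_num; done) | (exfalso; norm_num at *; done)

lemma t6_win3 {x1 x2 x3 : ℝ} (h1 : x1 = 0 ∨ x1 = 1) (h2 : x2 = 0 ∨ x2 = 1)
    (h3 : x3 = 0 ∨ x3 = 1)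
    (i1 : x1 = 1 → x2 = 0) (i2 : x2 = 1 → x3 = 0) (t1 : x1 = 0 → x2 = 0 → x3 = 0 → False)
    (q1 : x1 = 1 → x3 ≠ 1) :
    x1 + x2 + x3 = 1 := by
  rcases h1 with rfl | rfl <;> rcases h2 with rfl | rfl <;> rcases h3 with rfl | rfl <;>
    first | (norm_num; done) | (exfalso; norm_num at *; done)

/-- Classification of the lifted one-dimensional sequences. -/
lemma t6_seq {F p : ℤ → ℝ} {A l : ℝ} (hF0 : ∀ n, 0 ≤ F n) (hF1 : ∀ n, F n ≤ l)
    (hp : ∀ n, p n = 0 ∨ p n = 1)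
    (hD : ∀ i j k : ℤ, j = i + 1 → k = i + 2 → F k - 2 * F j + F i = 1 - p j - 2 * A)
    (hl : l < 0.4477) (h1 : 1 - l ≤ 2 * A) (h2 : A ≤ l → A < 0.388) :
    A = 1/2 ∨ A = 1/3 ∨ (A = 3/10 ∧ 2/5 ≤ l) := by
  have hdr : ∀ (w : ℤ) (δ : ℝ),
      (∀ n, (F (n + w + 1) - F (n + w)) - (F (n + 1) - F n) = δ) → δ = 0 := by
    intro w δ h
    refine t6_drift (E := fun n => F (n + 1) - F n) (C := l) (w := w) (fun n => ?_) h
    constructor <;> linarith [hF0 n, hF1 n, hF0 (n+1), hF1 (n+1)]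
  rcases lt_or_ge l A with hA | hA
  · left
    have hp0 : ∀ n, p n = 0 := by
      intro n
      rcases hp n with h | h
      · exact h
      · have := hD (n-1) n (n+1) (by ring) (by ring)
        linarith [hF0 (n-1), hF0 (n+1), hF1 n]
    have := hdr 1 (1 - 2 * A) (fun n => by
      have := hD n (n+1) (n+1+1) (by ring) (by ring)
      rw [hp0] at this; linarith)
    linarith
  right
  have h3 := h2 hA
  have no_adj : ∀ n, p n = 1 → p (n+1) = 0 := by
    intro n hn
    rcases hp (n+1) with h | h
    · exact h
    · have e1 := hD (n-1) n (n+1) (by ring) (by ring)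
      have e2 := hD n (n+1) (n+2) (by ring) (by ring)
      linarith [hF0 (n-1), hF0 (n+2), hF1 n, hF1 (n+1)]
  have no_adj' : ∀ n, p n = 1 → p (n-1) = 0 := by
    intro n hn
    rcases hp (n-1) with h | h
    · exact h
    · have := no_adj _ h
      rw [sub_add_cancel] at this; linarith
  have no_three : ∀ n, p n = 0 → p (n+1) = 0 → p (n+2) = 0 → False := by
    intro n a1 a2 a3
    have e1 := hD (n-1) n (n+1) (by ring) (by ring)
    have e2 := hD n (n+1) (n+2) (by ring) (by ring)
    have e3 := hD (n+1) (n+2) (n+3) (by ring) (by ring)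
    linarith [hF0 (n+1), hF1 (n+3), hF1 (n-1)]
  by_cases hg : ∃ n, p n = 1 ∧ p (n+2) = 1
  · right
    have h8 : 8 * A ≤ 2 + l := by
      obtain ⟨n, a1, a2⟩ := hg
      have b1 := no_adj' n a1
      have b2 := no_adj n a1
      have b3 := no_adj _ a2
      rw [show n + 2 + 1 = n + 3 by ring] at b3
      have e1 := hD (n-2) (n-1) n (by ring) (by ring)
      have e2 := hD (n-1) n (n+1) (by ring) (by ring)
      have e3 := hD n (n+1) (n+2) (by ring) (by ring)
      have e4 := hD (n+1) (n+2) (n+3) (by ring) (by ring)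
      have e5 := hD (n+2) (n+3) (n+4) (by ring) (by ring)
      linarith [hF0 (n-2), hF0 (n+4), hF1 n, hF1 (n+2)]
    have no33 : ∀ n, p n = 0 → p (n+1) = 0 → p (n+2) = 1 → p (n+3) = 0 → p (n+4) = 0 →
        False := by
      intro n a0 a1 a2 a3 a4
      have e0 := hD (n-1) n (n+1) (by ring) (by ring)
      have e1 := hD n (n+1) (n+2) (by ring) (by ring)
      have e2 := hD (n+1) (n+2) (n+3) (by ring) (by ring)
      have e3 := hD (n+2) (n+3) (n+4) (by ring) (by ring)
      have e4 := hD (n+3) (n+4) (n+5) (by ring) (by ring)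
      linarith [hF1 (n-1), hF1 (n+5), hF0 (n+1), hF0 (n+3)]
    have no222 : ∀ n, p n = 1 → p (n+2) = 1 → p (n+4) = 1 → p (n+6) = 1 → False := by
      intro n a0 a2 a4 a6
      have a1 := no_adj _ a0
      have a3 := no_adj _ a2
      rw [show n + 2 + 1 = n + 3 by ring] at a3
      have a5 := no_adj _ a4
      rw [show n + 4 + 1 = n + 5 by ring] at a5
      have e0 := hD (n-1) n (n+1) (by ring) (by ring)
      have e1 := hD n (n+1) (n+2) (by ring) (by ring)
      have e2 := hD (n+1) (n+2) (n+3) (by ring) (by ring)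
      have e3 := hD (n+2) (n+3) (n+4) (by ring) (by ring)
      have e4 := hD (n+3) (n+4) (n+5) (by ring) (by ring)
      have e5 := hD (n+4) (n+5) (n+6) (by ring) (by ring)
      have e6 := hD (n+5) (n+6) (n+7) (by ring) (by ring)
      linarith [hF0 (n-1), hF0 (n+1), hF0 (n+3), hF0 (n+5), hF0 (n+7),
        hF1 (n), hF1 (n+2), hF1 (n+4), hF1 (n+6)]
    have no22 : ∀ n, p n = 1 → p (n+2) = 1 → p (n+4) = 1 → False := by
      intro n a0 a2 a4
      have a1 := no_adj _ a0
      have am1 := no_adj' _ a0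
      have a3 := no_adj _ a2
      rw [show n + 2 + 1 = n + 3 by ring] at a3
      have a5 := no_adj _ a4
      rw [show n + 4 + 1 = n + 5 by ring] at a5
      have a6 : p (n+6) = 0 := by
        rcases hp (n+6) with h | h
        · exact h
        · exact (no222 n a0 a2 a4 h).elim
      have am2 : p (n-2) = 0 := by
        rcases hp (n-2) with h | h
        · exact h
        · refine (no222 (n-2) h ?_ ?_ ?_).elim
          · rwa [show n - 2 + 2 = n by ring]
          · rwa [show n - 2 + 4 = n + 2 by ring]
          · rwa [show n - 2 + 6 = n + 4 by ring]
      have em2 := hD (n-3) (n-2) (n-1) (by ring) (by ring)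
      have em1 := hD (n-2) (n-1) n (by ring) (by ring)
      have e0 := hD (n-1) n (n+1) (by ring) (by ring)
      have e1 := hD n (n+1) (n+2) (by ring) (by ring)
      have e2 := hD (n+1) (n+2) (n+3) (by ring) (by ring)
      have e3 := hD (n+2) (n+3) (n+4) (by ring) (by ring)
      have e4 := hD (n+3) (n+4) (n+5) (by ring) (by ring)
      have e5 := hD (n+4) (n+5) (n+6) (by ring) (by ring)
      have e6 := hD (n+5) (n+6) (n+7) (by ring) (by ring)
      linarith [hF0 (n-2), hF0 (n+6), hF1 (n+2), hF1 (n-3), hF1 (n+7)]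
    have h5 := hdr 5 (3 - 10 * A) (fun n => by
      have e1 := hD (n) (n+1) (n+2) (by ring) (by ring)
      have e2 := hD (n+1) (n+2) (n+3) (by ring) (by ring)
      have e3 := hD (n+2) (n+3) (n+4) (by ring) (by ring)
      have e4 := hD (n+3) (n+4) (n+5) (by ring) (by ring)
      have e5 := hD (n+4) (n+5) (n+6) (by ring) (by ring)
      have hs : p (n+1) + p (n+2) + p (n+3) + p (n+4) + p (n+5) = 2 := by
        have r2 : n + 2 = n + 1 + 1 := by ring
        have r3 : n + 3 = n + 1 + 2 := by ring
        have r4 : n + 4 = n + 1 + 3 := by ring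
        have r5 : n + 5 = n + 1 + 4 := by ring
        have r3' : n + 3 = n + 2 + 1 := by ring
        have r4' : n + 4 = n + 2 + 2 := by ring
        have r4'' : n + 4 = n + 3 + 1 := by ring
        have r5' : n + 5 = n + 3 + 2 := by ring
        have r5'' : n + 5 = n + 4 + 1 := by ring
        refine t6_win5 (hp _) (hp _) (hp _) (hp _) (hp _) ?_ ?_ ?_ ?_ ?_ ?_ ?_ ?_ ?_
        · rw [r2]; exact no_adj _
        · rw [r3']; exact no_adj _
        · rw [r4'']; exact no_adj _
        · rw [r5'']; exact no_adj _
        · rw [r2, r3]; exact no_three _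
        · rw [r3', r4']; exact no_three _
        · rw [r4'', r5']; exact no_three _
        · rw [r3, r5]; exact no22 _
        · rw [r2, r3, r4, r5]; exact no33 _
      rw [show n + 5 + 1 = n + 6 by ring]
      linarith)
    constructor <;> linarith
  · left
    push Not at hg
    have h5 := hdr 3 (2 - 6 * A) (fun n => by
      have e1 := hD (n) (n+1) (n+2) (by ring) (by ring)
      have e2 := hD (n+1) (n+2) (n+3) (by ring) (by ring)
      have e3 := hD (n+2) (n+3) (n+4) (by ring) (by ring)
      have hs : p (n+1) + p (n+2) + p (n+3) = 1 := by
        have r2 : n + 2 = n + 1 + 1 := by ring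
        have r3 : n + 3 = n + 1 + 2 := by ring
        have r3' : n + 3 = n + 2 + 1 := by ring
        refine t6_win3 (hp _) (hp _) (hp _) ?_ ?_ ?_ ?_
        · rw [r2]; exact no_adj _
        · rw [r3']; exact no_adj _
        · rw [r2, r3]; exact no_three _
        · rw [r3]; exact hg _
      rw [show n + 3 + 1 = n + 4 by ring]
      linarith)
    linarith

/-- The binary-form data attached to `x₂ = ±1`. -/
def t6_b (A t lam b0 b4 b5 : ℝ) (i j : ℝ) : ℝ :=
  b0 + b4 * i + b5 * j - A * (i + lam * j)^2 - t * j^2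

lemma t6_int01 {x : ℝ} {k : ℤ} {n : ℤ} (h : x = k) (h1 : (n : ℝ) - 1 < x) (h2 : x < n + 1) :
    x = n := by
  rw [h] at h1 h2 ⊢
  have h3 : n - 1 < k := by exact_mod_cast h1
  have h4 : k < n + 1 := by exact_mod_cast h2
  have : k = n := by omega
  rw [this]

lemma t6_coreA {A t lam b0 b4 b5 lo l : ℝ} (hl : l < 0.4477) (hAl : 2 * A + 2 * l < 2)
    (h1 : 1 - l ≤ 2 * A) (h2 : A ≤ l → A < 0.388)
    (h : ∀ i j : ℤ, ∃ N : ℤ, lo ≤ t6_b A t lam b0 b4 b5 i j - N ∧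
      t6_b A t lam b0 b4 b5 i j - N ≤ lo + l) :
    A = 1/2 ∨ A = 1/3 ∨ (A = 3/10 ∧ 2/5 ≤ l) := by
  choose N hN1 hN2 using fun i => h i 0
  refine t6_seq (F := fun i => t6_b A t lam b0 b4 b5 i (0:ℤ) - N i - lo)
    (p := fun n => 1 + ((N (n+1) - 2 * N n + N (n-1) : ℤ) : ℝ)) (l := l)
    (fun n => by linarith [hN1 n]) (fun n => by linarith [hN2 n]) ?_ ?_ hl h1 h2
  · intro n
    set q : ℤ := N (n+1) - 2 * N n + N (n-1) with hq
    have e : (t6_b A t lam b0 b4 b5 ((n+1 : ℤ)) (0:ℤ) - N (n+1)) -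
        2 * (t6_b A t lam b0 b4 b5 n (0:ℤ) - N n) +
        (t6_b A t lam b0 b4 b5 ((n-1 : ℤ)) (0:ℤ) - N (n-1)) = - q - 2 * A := by
      rw [hq]; unfold t6_b; push_cast; ring
    have g1 : ((-2 : ℤ) : ℝ) < q := by
      push_cast; linarith [hN1 n, hN2 (n-1), hN2 (n+1), hN1 (n-1), hN1 (n+1), hN2 n]
    have g2 : (q : ℝ) < (1 : ℤ) := by
      push_cast; linarith [hN1 n, hN2 (n-1), hN2 (n+1), hN1 (n-1), hN1 (n+1), hN2 n]
    have g3 : -2 < q := by exact_mod_cast g1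
    have g4 : q < 1 := by exact_mod_cast g2
    have g5 : q = -1 ∨ q = 0 := by omega
    rcases g5 with g | g
    · left; simp only [g]; norm_num
    · right; simp only [g]; norm_num
  · intro i j k hj hk
    subst hj hk
    have e1 : i + 1 + 1 = i + 2 := by ring
    have e2 : i + 1 - 1 = i := by ring
    simp only [e1, e2]
    unfold t6_b; push_cast; ring

lemma t6_core_half {t lam d a b0 b4 b5 : ℝ} (ha : 0 < a) (hl0 : 0 ≤ lam) (hl1 : lam ≤ 1/2)
    (hAC : (1/2 : ℝ) ≤ t + 1/2 * lam^2) (hd0 : 0 < d) (hd5 : d^5 = a * t)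
    (had3 : d ≤ 3 * a) (had : a + d ≤ 1) (hl : 1 - d - 3*a/4 < 1/2)
    (h : ∀ i j : ℤ, ∃ N : ℤ, d + a ≤ t6_b (1/2) t lam b0 b4 b5 i j - N ∧
      t6_b (1/2) t lam b0 b4 b5 i j - N ≤ (d + a) + (1 - d - 3*a/4)) :
    t = 1/2 ∧ lam = 0 ∧ (∃ k : ℤ, b4 = 1/2 + k) ∧ (∃ k : ℤ, b5 = 1/2 + k) := by
  have hlin : ∀ j : ℤ, ∃ M : ℤ, b4 - lam * j - 1/2 = M := by
    intro j
    refine t6_lin hl (fun n => h n j) (fun n => ⟨-n, ?_⟩)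
    unfold t6_b; push_cast; ring
  obtain ⟨M0, hM0⟩ := hlin 0
  obtain ⟨M1, hM1⟩ := hlin 1
  push_cast at hM0 hM1
  have hlam : lam = ((M0 - M1 : ℤ) : ℝ) := by push_cast; linarith
  have hlam0 : lam = 0 := by
    have := t6_int01 (n := 0) hlam (by push_cast; linarith) (by push_cast; linarith)
    simpa using this
  subst hlam0
  have ht : 1/2 ≤ t := by linarith
  have hd4 : t / 3 ≤ d^4 := by
    have : d * (t / 3) ≤ d * d^4 := by
      have : d * t ≤ 3 * a * t := mul_le_mul_of_nonneg_right had3 (by linarith)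
      nlinarith
    exact le_of_mul_le_mul_left this hd0
  have hd6 : 0.63 < d := by
    by_contra hc
    push Not at hc
    have : d^4 ≤ 0.63^4 := by gcongr
    norm_num at this; linarith
  have hd7 : d ≤ 0.75 := by linarith
  obtain ⟨M2, hM2⟩ := t6_quad (g := fun n => t6_b (1/2) t 0 b0 b4 b5 (0:ℤ) n) (δ := -2 * t)
    (by linarith) (fun n => h 0 n) (fun n => by unfold t6_b; push_cast; ring)
  have ht1 : t < 1 := by
    have : d^4 ≤ 0.75^4 := by gcongr
    norm_num at this; linarith
  have ht2 : 2 * t = ((1 : ℤ) : ℝ) := by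
    refine t6_int01 (k := -M2) (by push_cast; linarith) ?_ ?_
    · push_cast; linarith
    · push_cast; linarith
  have ht3 : t = 1/2 := by push_cast at ht2; linarith
  subst ht3
  refine ⟨rfl, rfl, ⟨M0, by linarith⟩, ?_⟩
  obtain ⟨M3, hM3⟩ := t6_lin (g := fun n => t6_b (1/2) (1/2) 0 b0 b4 b5 (0:ℤ) n)
    (δ := b5 - 1/2) hl (fun n => h 0 n) (fun n => ⟨-n, by unfold t6_b; push_cast; ring⟩)
  exact ⟨M3, by linarith⟩

lemma t6_core_three_tenth {t lam d a b0 b4 b5 : ℝ} (ha : 0 < a) (hl0 : 0 ≤ lam)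
    (hl1 : lam ≤ 1/2)
    (hAC : (3/10 : ℝ) ≤ t + 3/10 * lam^2) (hd0 : 0 < d) (hd5 : d^5 = 2 * a * (3/10) * t)
    (had3 : d ≤ 3 * a) (hl : 1 - d - 3*a/4 < 1/2) (hl' : 2/5 ≤ 1 - d - 3*a/4)
    (h : ∀ i j : ℤ, ∃ N : ℤ, d + a ≤ t6_b (3/10) t lam b0 b4 b5 i j - N ∧
      t6_b (3/10) t lam b0 b4 b5 i j - N ≤ (d + a) + (1 - d - 3*a/4)) : False := by
  have hlin : ∀ j : ℤ, ∃ M : ℤ, 5 * b4 - 3 * lam * j - 15/2 = M := by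
    intro j
    refine t6_lin hl (fun n => h (5 * n) j) (fun n => ⟨-15*n, ?_⟩)
    unfold t6_b; push_cast; ring
  obtain ⟨M0, hM0⟩ := hlin 0
  obtain ⟨M1, hM1⟩ := hlin 1
  push_cast at hM0 hM1
  have hlam : 3 * lam = ((M0 - M1 : ℤ) : ℝ) := by push_cast; linarith
  have hq : lam ≤ 1/3 := by
    by_contra hc
    push Not at hc
    have := t6_int01 (n := 1) hlam (by push_cast; linarith) (by push_cast; linarith)
    push_cast at this; linarith
  have hl2 : lam^2 ≤ 1/9 := by nlinarith
  have ht : 4/15 ≤ t := by linarith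
  have hd4 : t / 5 ≤ d^4 := by
    have : d * (t / 5) ≤ d * d^4 := by
      have : d * t ≤ 3 * a * t := mul_le_mul_of_nonneg_right had3 (by linarith)
      nlinarith
    exact le_of_mul_le_mul_left this hd0
  have hd7 : d ≤ 0.48 := by linarith
  have : d^4 ≤ 0.48^4 := by gcongr
  norm_num at this; linarith

lemma t6_core_third {t lam d a b0 b4 b5 : ℝ} (ha : 0 < a) (hl0 : 0 ≤ lam) (hl1 : lam ≤ 1/2)
    (hAC : (1/3 : ℝ) ≤ t + 1/3 * lam^2) (hd0 : 0 < d) (hd5 : d^5 = 2 * a * (1/3) * t)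
    (had3 : d ≤ 3 * a) (hl : 1 - d - 3*a/4 < 0.4477)
    (h : ∀ i j : ℤ, ∃ N : ℤ, d + a ≤ t6_b (1/3) t lam b0 b4 b5 i j - N ∧
      t6_b (1/3) t lam b0 b4 b5 i j - N ≤ (d + a) + (1 - d - 3*a/4)) :
    t = 1/4 ∧ lam = 1/2 ∧ (∃ k : ℤ, 3 * b4 = k) ∧ (∃ k : ℤ, 3 * b5 = k) ∧
      (∃ k : ℤ, b4 + b5 = k) := by
  have hlh : 1 - d - 3*a/4 < 1/2 := by linarith
  have hlin : ∀ j : ℤ, ∃ M : ℤ, 3 * b4 - 2 * lam * j - 3 = M := by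
    intro j
    refine t6_lin hlh (fun n => h (3 * n) j) (fun n => ⟨-6*n, ?_⟩)
    unfold t6_b; push_cast; ring
  obtain ⟨M0, hM0⟩ := hlin 0
  obtain ⟨M1, hM1⟩ := hlin 1
  push_cast at hM0 hM1
  obtain ⟨k1, hk1⟩ : ∃ k : ℤ, 3 * b4 = k := ⟨M0 + 3, by push_cast; linarith⟩
  obtain ⟨mu, hmu⟩ : ∃ k : ℤ, 2 * lam = k := ⟨M0 - M1, by push_cast; linarith⟩
  have hlow : ∀ n : ℤ, ∃ N : ℤ,
      d + a ≤ t6_b (1/3) t lam b0 b4 b5 (2*k1 + 1 - mu * n : ℤ) (2 * n : ℤ) - N ∧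
      t6_b (1/3) t lam b0 b4 b5 (2*k1 + 1 - mu * n : ℤ) (2 * n : ℤ) - N ≤
        (d + a) + (1 - d - 3*a/4 - 1/3) := by
    intro n
    obtain ⟨N1, x1, y1⟩ := h (2*k1 + 1 - mu * n) (2 * n)
    obtain ⟨N2, x2, y2⟩ := h (2*k1 - mu * n) (2 * n)
    have e : t6_b (1/3) t lam b0 b4 b5 (2*k1 + 1 - mu * n : ℤ) (2 * n : ℤ) -
        t6_b (1/3) t lam b0 b4 b5 (2*k1 - mu * n : ℤ) (2 * n : ℤ) = - k1 - 1/3 := by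
      unfold t6_b
      push_cast
      rw [← hmu, ← hk1]; ring
    have e2 : ((k1 - N2 + N1 : ℤ) : ℝ) = ((0 : ℤ) : ℝ) := by
      refine t6_int01 rfl ?_ ?_ <;> push_cast <;> linarith
    push_cast at e2
    exact ⟨N1, x1, by linarith⟩
  have hl3 : d + 3*a/4 ≤ 2/3 := by
    obtain ⟨N, x1, y1⟩ := hlow 0
    linarith
  have hd7 : d ≤ 0.5334 := by linarith
  obtain ⟨M2, hM2⟩ := t6_quad (δ := -8 * t) (by linarith) hlow
    (fun n => by unfold t6_b; push_cast; rw [← hmu]; ring)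
  have hl4 : lam^2 ≤ 1/4 := by nlinarith
  have ht0 : 1/4 ≤ t := by linarith
  have hd4 : t * (2/9) ≤ d^4 := by
    have : d * (t * (2/9)) ≤ d * d^4 := by
      have : d * t ≤ 3 * a * t := mul_le_mul_of_nonneg_right had3 (by linarith)
      nlinarith
    exact le_of_mul_le_mul_left this hd0
  have ht1 : t < 3/8 := by
    have : d^4 ≤ 0.5334^4 := by gcongr
    norm_num at this; linarith
  have ht2 : 8 * t = ((2 : ℤ) : ℝ) := by
    refine t6_int01 (k := -M2) (by push_cast; linarith) ?_ ?_
    · push_cast; linarith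
    · push_cast; linarith
  have ht3 : t = 1/4 := by push_cast at ht2; linarith
  have hlamh : lam = 1/2 := by
    have : (1/2)^2 ≤ lam^2 := by nlinarith
    have : 1/2 ≤ lam := by nlinarith
    linarith
  subst ht3 hlamh
  refine ⟨rfl, rfl, ⟨k1, hk1⟩, ?_, ?_⟩
  · exact t6_lin (δ := 3 * b5) hlh (fun n => h 0 (3 * n))
      (fun n => ⟨-3 * (2 * n + 1), by unfold t6_b; push_cast; ring⟩)
  · exact t6_lin (δ := b4 + b5) hlh (fun n => h n n)
      (fun n => ⟨-(2 * n + 1), by unfold t6_b; push_cast; ring⟩)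

lemma t6_core {a A t lam d b0 b4 b5 : ℝ} (ha : 0 < a) (hA : 0 < A) 
    (hl0 : 0 ≤ lam) (hl1 : lam ≤ 1/2) (hAC : A ≤ t + A * lam^2) (hd0 : 0 < d)
    (hd5 : d^5 = 2 * a * A * t) (had3 : d ≤ 3 * a)
    (hK1 : A < d + 3*a/4) (hK2 : d + 3*a/4 ≤ 2 * A) (had : a + d ≤ 1)
    (h : ∀ i j : ℤ, ∃ N : ℤ, d + a ≤ t6_b A t lam b0 b4 b5 i j - N ∧
      t6_b A t lam b0 b4 b5 i j - N ≤ 1 + a/4) :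
    (A = 1/2 ∧ t = 1/2 ∧ lam = 0 ∧ (∃ k : ℤ, b4 = 1/2 + k) ∧ (∃ k : ℤ, b5 = 1/2 + k)) ∨
    (A = 1/3 ∧ t = 1/4 ∧ lam = 1/2 ∧ (∃ k : ℤ, 3 * b4 = k) ∧ (∃ k : ℤ, 3 * b5 = k) ∧
      (∃ k : ℤ, b4 + b5 = k)) := by
  have hl4 : lam^2 ≤ 1/4 := by nlinarith
  have ht : 3/4 * A ≤ t := by nlinarith
  have hd4 : A^2 / 2 ≤ d^4 := by
    have : d * (A^2 / 2) ≤ d * d^4 := by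
      have e1 : d * A^2 ≤ 3 * a * A^2 := mul_le_mul_of_nonneg_right had3 (by positivity)
      have e2 : 2 * a * A * (3/4 * A) ≤ 2 * a * A * t :=
        mul_le_mul_of_nonneg_left ht (by positivity)
      nlinarith
    exact le_of_mul_le_mul_left this hd0
  have hA5 : 5/8 * d ≤ A := by linarith
  have hd2 : 25/128 ≤ d^2 := by
    have e1 : (5/8*d)^2 ≤ A^2 := by gcongr
    have : d^2 * (25/128) ≤ d^2 * d^2 := by nlinarith
    exact le_of_mul_le_mul_left this (by positivity)
  have hd6 : 0.4419 < d := by nlinarith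
  have h' : ∀ i j : ℤ, ∃ N : ℤ, d + a ≤ t6_b A t lam b0 b4 b5 i j - N ∧
      t6_b A t lam b0 b4 b5 i j - N ≤ (d + a) + (1 - d - 3*a/4) := by
    intro i j
    obtain ⟨N, x, y⟩ := h i j
    exact ⟨N, x, by linarith⟩
  have hl : 1 - d - 3*a/4 < 0.4477 := by linarith
  have hh : A ≤ 1 - d - 3*a/4 → A < 0.388 := by
    intro h1
    by_contra hc
    push Not at hc
    have e1 : (0.388:ℝ)^2 ≤ A^2 := by gcongr
    have e2 : 0.52 < d := by
      by_contra hc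
      push Not at hc
      have : d^4 ≤ 0.52^4 := by gcongr
      norm_num at this e1; linarith
    linarith
  rcases t6_coreA hl (by linarith) (by linarith) hh h' with e | e | ⟨e, e'⟩
  · left
    subst e
    exact ⟨rfl, t6_core_half ha hl0 hl1 hAC hd0 (by linarith) had3 had (by linarith) h'⟩
  · right
    subst e
    exact ⟨rfl, t6_core_third ha hl0 hl1 hAC hd0 hd5 had3 hl h'⟩
  · subst e
    exact (t6_core_three_tenth ha hl0 hl1 hAC hd0 hd5 had3 (by linarith) e' h').elim

/-- A bad value in the upper range forces the offset to be close to an integer. -/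
lemma t6_s6 {a d s B : ℝ} (ha : 0 < a) (had : 2 * a < d) (hB1 : d + a ≤ B)
    (hB2 : B < d + 9/4 * a) (h : T6Bad a d s B) : ∃ n : ℤ, -1/6 < s + n ∧ s + n < 1/6 := by
  have key : ∀ r : ℝ, 0 ≤ r → r ≤ 1/2 →
      ¬ (0 < B - a * (1 + r)^2 ∧ B - a * (1 + r)^2 < d) →
      ¬ (0 < B - a * (2 - r)^2 ∧ B - a * (2 - r)^2 < d) → r < 1/6 := by
    intro r hr0 hr1 e2 e3
    have hr2 : r^2 ≤ 1/4 := by nlinarith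
    have f2 : d ≤ B - a * (1 + r)^2 := by
      by_contra hh
      push Not at hh
      refine e2 ⟨?_, hh⟩
      nlinarith
    have f3 : B - a * (2 - r)^2 ≤ 0 := by
      by_contra hh
      push Not at hh
      refine e3 ⟨hh, ?_⟩
      nlinarith
    by_contra hc
    push Not at hc
    nlinarith
  obtain ⟨n, r, hr, hr1, hr2⟩ := t6_near s
  have g2 : ∀ k : ℤ, ¬ (0 < B - a * (r + k)^2 ∧ B - a * (r + k)^2 < d) := by
    intro k
    have := h (n + k)
    have e : s + ((n + k : ℤ) : ℝ) = r + k := by push_cast; linarith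
    rwa [e] at this
  refine ⟨n, ?_⟩
  rw [hr]
  rcases le_total 0 r with h0 | h0
  · have := key r h0 hr2 (by
      have := g2 1
      have e : (r + ((1:ℤ):ℝ))^2 = (1 + r)^2 := by push_cast; ring
      rwa [e] at this) (by
      have := g2 (-2)
      have e : (r + ((-2:ℤ):ℝ))^2 = (2 - r)^2 := by push_cast; ring
      rwa [e] at this)
    constructor <;> linarith
  · have := key (-r) (by linarith) (by linarith) (by
      have := g2 (-1)
      have e : (r + ((-1:ℤ):ℝ))^2 = (1 + -r)^2 := by push_cast; ring
      rwa [e] at this) (by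
      have := g2 2
      have e : (r + ((2:ℤ):ℝ))^2 = (2 - -r)^2 := by push_cast; ring
      rwa [e] at this)
    constructor <;> linarith

lemma t6_bad_shift {a d s s' B : ℝ} {k : ℤ} (hs : s = s' + k) (h : T6Bad a d s B) :
    T6Bad a d s' B := by
  intro n
  have := h (n - k)
  have e : s + ((n - k : ℤ) : ℝ) = s' + n := by push_cast; linarith
  rwa [e] at this

/-- The `x₃`-free part of the form after completing the square, at `x₂ = e`. -/
def t6_T (A t lam c₁ c₄ c₅ th al al' : ℝ) (e i j : ℝ) : ℝ :=
  e * c₁ + e^2 * th + e * (al * (c₄ + i) + al' * (c₅ + j))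
    - A * (c₄ + i + lam * (c₅ + j))^2 - t * (c₅ + j)^2

/-- One coordinate at `x₂ = 2` in the first exceptional configuration. -/
noncomputable def t6_G (al c i : ℝ) : ℝ := 2 * c^2 + 2 * al * i - (c + i)^2 / 2

lemma t6_coord {al c : ℝ} {k k' : ℤ} (h1 : al - c = 1/2 + k) (h2 : -al - c = 1/2 + k') :
    (∃ i e : ℤ, ∀ n : ℤ, t6_G al c (i + n : ℤ) = e + 3/8 - n * (n + 1) / 2) ∨
    (∃ i e : ℤ, ∀ n : ℤ, t6_G al c (i + n : ℤ) = e + 1/2 - n^2 / 2) := by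
  have hc : c = -(1 + k + k') / 2 := by linarith
  have hal : al = (k - k') / 2 := by linarith
  subst hc hal
  rcases Int.even_or_odd' (k - k') with ⟨q, hq | hq⟩
  · left
    have hk : k = k' + 2 * q := by linarith
    subst hk
    refine ⟨k' + 3 * q + 1,
      2 * q^2 + 2 * q * (k' + q) + q + 2 * (k' + q)^2 + 2 * (k' + q), fun n => ?_⟩
    unfold t6_G; push_cast; ring
  · right
    have hk : k = k' + 2 * q + 1 := by linarith
    subst hk
    refine ⟨k' + 3 * q + 2,
      2 * q^2 + 2 * q + (k' + q + 1) * (2 * q + 1) + 2 * (k' + q + 1)^2, fun n => ?_⟩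
    unfold t6_G; push_cast; ring

/-- Elimination of the first exceptional configuration. -/
lemma t6_case1 {a d c₁ c₄ c₅ th al al' h₄ h₅ : ℝ} {σ : ℤ → ℝ} (ha : 0 < a) (hd0 : 0 < d)
    (had2 : 2 * a < d) (had3 : d ≤ 3 * a) (had : a + d ≤ 1) (hd5 : d^5 = a / 2)
    (h1 : ∃ k : ℤ, al - c₄ = 1/2 + k) (h2 : ∃ k : ℤ, -al - c₄ = 1/2 + k)
    (h3 : ∃ k : ℤ, al' - c₅ = 1/2 + k) (h4 : ∃ k : ℤ, -al' - c₅ = 1/2 + k)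
    (HB : ∀ e i j n : ℤ, T6Bad a d (σ e + h₄ * i + h₅ * j)
      (t6_T (1/2) (1/2) 0 c₁ c₄ c₅ th al al' e i j + e * n)) : False := by
  obtain ⟨k1, h1⟩ := h1
  obtain ⟨k2, h2⟩ := h2
  obtain ⟨k3, h3⟩ := h3
  obtain ⟨k4, h4⟩ := h4
  have hd4 : 1/6 ≤ d^4 := by
    have : d * (1/6) ≤ d * d^4 := by nlinarith
    exact le_of_mul_le_mul_left this hd0
  have hd6 : 0.638 < d := by
    by_contra hc
    push Not at hc
    have : d^4 ≤ 0.638^4 := by gcongr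
    norm_num at this; linarith
  have ha3 : a < 1/3 := by linarith
  have ha4 : 0.212 < a := by linarith
  set u := t6_T (1/2) (1/2) 0 c₁ c₄ c₅ th al al' 1 0 0 with hu
  set v := t6_T (1/2) (1/2) 0 c₁ c₄ c₅ th al al' (-1) 0 0 with hv
  have HU : ∀ i j N : ℤ, T6Bad a d (σ 1 + h₄ * i + h₅ * j) (u + N) := by
    intro i j N
    have hi : ∃ q : ℤ, (i : ℝ) * (i - 1) / 2 = q := by
      obtain ⟨q, hq⟩ := Int.even_mul_pred_self i
      refine ⟨q, ?_⟩
      have : (i : ℝ) * (i - 1) = q + q := by exact_mod_cast hq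
      linarith
    have hj : ∃ q : ℤ, (j : ℝ) * (j - 1) / 2 = q := by
      obtain ⟨q, hq⟩ := Int.even_mul_pred_self j
      refine ⟨q, ?_⟩
      have : (j : ℝ) * (j - 1) = q + q := by exact_mod_cast hq
      linarith
    obtain ⟨q, hq⟩ := hi
    obtain ⟨q', hq'⟩ := hj
    have := HB 1 i j (N + q + q' - k1 * i - k3 * j)
    have e : t6_T (1/2) (1/2) 0 c₁ c₄ c₅ th al al' (1:ℤ) i j +
        (1 : ℤ) * ((N + q + q' - k1 * i - k3 * j : ℤ) : ℝ) = u + N := by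
      have e1 : al = c₄ + 1/2 + k1 := by linarith
      have e2 : al' = c₅ + 1/2 + k3 := by linarith
      rw [hu]; push_cast; rw [← hq, ← hq', e1, e2]; unfold t6_T; ring
    rwa [e] at this
  have HV : ∀ N : ℤ, T6Bad a d (σ (-1)) (v + N) := by
    intro N
    have := HB (-1) 0 0 (-N)
    push_cast at this
    simpa [hv] using this
  obtain ⟨Nu, U1, U2⟩ := t6_arc' ha had2 (by linarith) (by linarith) (fun N => by
    have := HU 0 0 N; simpa using this)
  obtain ⟨Nv, V1, V2⟩ := t6_arc' ha had2 (by linarith) (by linarith) HV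
  have hs : ∀ i j : ℤ, ∃ n : ℤ, -1/6 ≤ σ 1 + h₄ * i + h₅ * j - n ∧
      σ 1 + h₄ * i + h₅ * j - n ≤ -1/6 + 1/3 := by
    intro i j
    have h := HU i j (-Nu)
    push_cast at h
    obtain ⟨n, x, y⟩ := t6_s6 ha had2 (by linarith) (by linarith) h
    exact ⟨-n, by push_cast; linarith, by push_cast; linarith⟩
  obtain ⟨H4, hH4⟩ := t6_lin (δ := h₄) (by norm_num) (fun n => hs n 0)
    (fun n => ⟨0, by push_cast; ring⟩)
  obtain ⟨H5, hH5⟩ := t6_lin (δ := h₅) (by norm_num) (fun n => hs 0 n)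
    (fun n => ⟨0, by push_cast; ring⟩)
  obtain ⟨τ, hτ⟩ : ∃ τ, τ = 3 * (u - Nu) + (v - Nv) - 4 := ⟨_, rfl⟩
  have H2 : ∀ (i j : ℤ) (r : ℝ) (M : ℤ), t6_G al c₄ i + t6_G al' c₅ j = r + M →
      Even (M + 3 * Nu + Nv) → T6Bad a d (σ 2) (τ + r) := by
    intro i j r M hr ⟨q, hq⟩
    have h := HB 2 i j (-q - 2)
    have hqr : (M : ℝ) + 3 * Nu + Nv = q + q := by exact_mod_cast hq
    have e : t6_T (1/2) (1/2) 0 c₁ c₄ c₅ th al al' (2:ℤ) i j + (2:ℤ) * ((-q - 2 : ℤ) : ℝ)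
        = τ + r := by
      have : r = t6_G al c₄ i + t6_G al' c₅ j - M := by linarith
      rw [this, hτ, hu, hv]
      have : (M : ℝ) = q + q - 3 * Nu - Nv := by linarith
      rw [this]; push_cast
      unfold t6_T t6_G; ring
    rw [e] at h
    refine t6_bad_shift (k := H4 * i + H5 * j) ?_ h
    push_cast; rw [hH4, hH5]; ring
  have hτ1 : 4 * (d + a) - 4 ≤ τ := by linarith
  have hτ2 : τ ≤ a / 9 := by linarith
  rcases t6_coord h1 h2 with ⟨i, e, hi⟩ | ⟨i, e, hi⟩ <;>
    rcases t6_coord h3 h4 with ⟨j, e', hj⟩ | ⟨j, e', hj⟩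
  · refine t6_cover (s := σ 2) (B := τ + 3/4) ha had2 (by linarith) (by linarith) ?_
    rcases Int.even_or_odd (e + e' + 3 * Nu + Nv) with ho | ho
    · refine H2 (i + 0) (j + 0) _ (e + e') ?_ ho
      rw [hi, hj]; push_cast; ring
    · refine H2 (i + 1) (j + 0) _ (e + e' - 1) ?_ ?_
      · rw [hi, hj]; push_cast; ring
      · obtain ⟨q, hq⟩ := ho
        exact ⟨q, by linarith⟩
  · by_cases hc : τ + 7/8 < d + a
    · refine t6_cover (s := σ 2) (B := τ + 7/8) ha had2 (by linarith) (by linarith) ?_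
      rcases Int.even_or_odd (e + e' + 3 * Nu + Nv) with ho | ho
      · refine H2 (i + 0) (j + 0) _ (e + e') ?_ ho
        rw [hi, hj]; push_cast; ring
      · refine H2 (i + 1) (j + 0) _ (e + e' - 1) ?_ ?_
        · rw [hi, hj]; push_cast; ring
        · obtain ⟨q, hq⟩ := ho
          exact ⟨q, by linarith⟩
    · push Not at hc
      refine t6_cover (s := σ 2) (B := τ + 3/8) ha had2 (by linarith) (by linarith) ?_
      rcases Int.even_or_odd (e + e' + 3 * Nu + Nv) with ho | ho
      · refine H2 (i + 0) (j + 1) _ (e + e') ?_ ho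
        rw [hi, hj]; push_cast; ring
      · refine H2 (i + 1) (j + 1) _ (e + e' - 1) ?_ ?_
        · rw [hi, hj]; push_cast; ring
        · obtain ⟨q, hq⟩ := ho
          exact ⟨q, by linarith⟩
  · by_cases hc : τ + 7/8 < d + a
    · refine t6_cover (s := σ 2) (B := τ + 7/8) ha had2 (by linarith) (by linarith) ?_
      rcases Int.even_or_odd (e + e' + 3 * Nu + Nv) with ho | ho
      · refine H2 (i + 0) (j + 0) _ (e + e') ?_ ho
        rw [hi, hj]; push_cast; ring
      · refine H2 (i + 0) (j + 1) _ (e + e' - 1) ?_ ?_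
        · rw [hi, hj]; push_cast; ring
        · obtain ⟨q, hq⟩ := ho
          exact ⟨q, by linarith⟩
    · push Not at hc
      refine t6_cover (s := σ 2) (B := τ + 3/8) ha had2 (by linarith) (by linarith) ?_
      rcases Int.even_or_odd (e + e' + 3 * Nu + Nv) with ho | ho
      · refine H2 (i + 1) (j + 0) _ (e + e') ?_ ho
        rw [hi, hj]; push_cast; ring
      · refine H2 (i + 1) (j + 1) _ (e + e' - 1) ?_ ?_
        · rw [hi, hj]; push_cast; ring
        · obtain ⟨q, hq⟩ := ho
          exact ⟨q, by linarith⟩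
  · have B1 : T6Bad a d (σ 2) (τ + 1) := by
      rcases Int.even_or_odd (e + e' + 3 * Nu + Nv) with ho | ho
      · refine H2 (i + 0) (j + 0) _ (e + e') ?_ ho
        rw [hi, hj]; push_cast; ring
      · refine H2 (i + 1) (j + 1) _ (e + e' - 1) ?_ ?_
        · rw [hi, hj]; push_cast; ring
        · obtain ⟨q, hq⟩ := ho
          exact ⟨q, by linarith⟩
    by_cases hc : τ + 1 < d + a
    · exact t6_cover ha had2 (by linarith) hc B1
    push Not at hc
    rcases Int.even_or_odd (e + e' + 3 * Nu + Nv) with ho | ho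
    · refine t6_cover (s := σ 2) (B := τ + 1/2) ha had2 (by linarith) (by linarith) ?_
      refine H2 (i + 1) (j + 0) _ (e + e') ?_ ho
      rw [hi, hj]; push_cast; ring
    · have B2 : T6Bad a d (σ 2) (τ + 3/2) := by
        refine H2 (i + 1) (j + 0) _ (e + e' - 1) ?_ ?_
        · rw [hi, hj]; push_cast; ring
        · obtain ⟨q, hq⟩ := ho
          exact ⟨q, by linarith⟩
      obtain ⟨n, z1, z2⟩ := t6_z3 (σ 2)
      have f1 : a * (9/4) ≤ a * (σ 2 + n)^2 := mul_le_mul_of_nonneg_left z1 ha.le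
      have f2 : a * (σ 2 + n)^2 ≤ a * 4 := mul_le_mul_of_nonneg_left z2 ha.le
      by_cases hx : 0 < τ + 1 - a * (σ 2 + n)^2
      · exact B1 n ⟨hx, by linarith⟩
      · push Not at hx
        exact B2 n ⟨by linarith, by linarith⟩

lemma t6_arc_third {a d s s' B : ℝ} (ha : 0 < a) (had : 2 * a < d) (hd : 0.485 < d)
    (h : ∀ N : ℤ, T6Bad a d s (B + N)) (h' : ∀ N : ℤ, T6Bad a d s' (B + 1/3 + N)) :
    ∃ N : ℤ, d + a ≤ B - N ∧ B - N ≤ 2/3 + a/4 := by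
  obtain ⟨N1, x1, y1⟩ := t6_arc ha had h
  obtain ⟨N2, x2, y2⟩ := t6_arc ha had h'
  have e2 : ((N2 - N1 : ℤ) : ℝ) = ((0 : ℤ) : ℝ) := by
    refine t6_int01 rfl ?_ ?_ <;> push_cast <;> linarith
  push_cast at e2
  exact ⟨N1, x1, by linarith⟩

/-- Elimination of the second exceptional configuration. -/
lemma t6_case2 {a d c₁ c₄ c₅ th al al' h₄ h₅ : ℝ} {σ : ℤ → ℝ} {p q p' q' : ℤ}
    (ha : 0 < a) (hd0 : 0 < d)
    (had2 : 2 * a < d) (had3 : d ≤ 3 * a) (hd5 : d^5 = a / 6)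
    (h1 : 3 * al - 2 * c₄ - c₅ = 2 * p + q) (h2 : 3 * al' - c₄ - 2 * c₅ = p + 2 * q)
    (h3 : -3 * al - 2 * c₄ - c₅ = 2 * p' + q') (h4 : -3 * al' - c₄ - 2 * c₅ = p' + 2 * q')
    (HB : ∀ e i j n : ℤ, T6Bad a d (σ e + h₄ * i + h₅ * j)
      (t6_T (1/3) (1/4) (1/2) c₁ c₄ c₅ th al al' e i j + e * n)) : False := by
  have hd4 : 1/18 ≤ d^4 := by
    have : d * (1/18) ≤ d * d^4 := by nlinarith
    exact le_of_mul_le_mul_left this hd0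
  have hd6 : 0.485 < d := by
    by_contra hc
    push Not at hc
    have : d^4 ≤ 0.485^4 := by gcongr
    norm_num at this; linarith
  have ha4 : 0.1616 < a := by linarith
  have ec4 : c₄ = -(p + p') / 2 := by linarith
  have ec5 : c₅ = -(q + q') / 2 := by linarith
  have eal : al = (2 * (p - p') + (q - q')) / 6 := by linarith
  have eal' : al' = ((p - p') + 2 * (q - q')) / 6 := by linarith
  set u := t6_T (1/3) (1/4) (1/2) c₁ c₄ c₅ th al al' 1 (p + 1) q with hu
  set v := t6_T (1/3) (1/4) (1/2) c₁ c₄ c₅ th al al' (-1) (p' + 1) q' with hv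
  have HU : ∀ i j M N : ℤ, i^2 + i * j + j^2 = 3 * M + 1 →
      T6Bad a d (σ 1 + h₄ * (p + i) + h₅ * (q + j)) (u + N) := by
    intro i j M N hM
    have := HB 1 (p + i) (q + j) (N + M)
    have hMr : (i : ℝ)^2 + i * j + j^2 = 3 * M + 1 := by exact_mod_cast hM
    have e : t6_T (1/3) (1/4) (1/2) c₁ c₄ c₅ th al al' (1:ℤ) (p + i : ℤ) (q + j : ℤ) +
        (1 : ℤ) * ((N + M : ℤ) : ℝ) = u + N := by
      have hMr' : (M : ℝ) = ((i : ℝ)^2 + i * j + j^2 - 1) / 3 := by linarith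
      rw [hu]; push_cast; rw [hMr', ec4, ec5, eal, eal']; unfold t6_T; ring
    rw [e] at this
    push_cast at this
    exact this
  have HU' : ∀ N : ℤ, T6Bad a d (σ 1 + h₄ * p + h₅ * q) (u + 1/3 + N) := by
    intro N
    have := HB 1 p q N
    have e : t6_T (1/3) (1/4) (1/2) c₁ c₄ c₅ th al al' (1:ℤ) p q +
        (1 : ℤ) * (N : ℝ) = u + 1/3 + N := by
      rw [hu]; push_cast; rw [ec4, ec5, eal, eal']; unfold t6_T; ring
    rwa [e] at this
  have HV : ∀ N : ℤ, T6Bad a d (σ (-1) + h₄ * (p' + 1) + h₅ * q') (v + N) := by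
    intro N
    have := HB (-1) (p' + 1) q' (-N)
    push_cast at this
    rw [neg_one_mul, neg_neg] at this
    exact this
  have HV' : ∀ N : ℤ, T6Bad a d (σ (-1) + h₄ * p' + h₅ * q') (v + 1/3 + N) := by
    intro N
    have := HB (-1) p' q' (-N)
    have e : t6_T (1/3) (1/4) (1/2) c₁ c₄ c₅ th al al' (-1:ℤ) p' q' +
        (-1 : ℤ) * ((-N : ℤ) : ℝ) = v + 1/3 + N := by
      rw [hv]; push_cast; rw [ec4, ec5, eal, eal']; unfold t6_T; ring
    rwa [e] at this
  obtain ⟨Nu, U1, U2⟩ := t6_arc_third ha had2 hd6 (fun N => HU 1 0 0 N (by norm_num)) HU'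
  obtain ⟨Nv, V1, V2⟩ := t6_arc_third ha had2 hd6 HV HV'
  have hs : ∀ i j M : ℤ, i^2 + i * j + j^2 = 3 * M + 1 →
      ∃ n : ℤ, -1/6 < σ 1 + h₄ * (p + i) + h₅ * (q + j) - n ∧
      σ 1 + h₄ * (p + i) + h₅ * (q + j) - n < -1/6 + 1/3 := by
    intro i j M hM
    have h := HU i j M (-Nu) hM
    push_cast at h
    obtain ⟨n, x, y⟩ := t6_s6 ha had2 (by linarith) (by linarith) h
    exact ⟨-n, by push_cast; linarith, by push_cast; linarith⟩
  have hs' : ∀ i j M : ℤ, i^2 + i * j + j^2 = 3 * M + 1 →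
      ∃ n : ℤ, -1/6 ≤ σ 1 + h₄ * (p + i) + h₅ * (q + j) - n ∧
      σ 1 + h₄ * (p + i) + h₅ * (q + j) - n ≤ -1/6 + 1/3 := by
    intro i j M hM
    obtain ⟨n, x, y⟩ := hs i j M hM
    exact ⟨n, x.le, y.le⟩
  obtain ⟨G4, hG4⟩ := t6_lin (δ := 3 * h₄) (by norm_num)
    (fun n => hs' (1 + 3 * n) 0 (2 * n + 3 * n^2) (by ring))
    (fun n => ⟨0, by push_cast; ring⟩)
  obtain ⟨G5, hG5⟩ := t6_lin (δ := h₄ + h₅) (by norm_num)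
    (fun n => hs' (1 + n) n (n + n^2) (by ring))
    (fun n => ⟨0, by push_cast; ring⟩)
  obtain ⟨H4, hH4⟩ : ∃ k : ℤ, h₄ = k := by
    obtain ⟨n1, x1, y1⟩ := hs 1 0 0 (by norm_num)
    obtain ⟨n2, x2, y2⟩ := hs 2 0 1 (by norm_num)
    push_cast at x1 y1 x2 y2
    have e : 3 * (h₄ - n2 + n1) = ((0 : ℤ) : ℝ) := by
      refine t6_int01 (k := G4 - 3 * n2 + 3 * n1) ?_ ?_ ?_ <;> push_cast <;> linarith
    push_cast at e
    exact ⟨n2 - n1, by push_cast; linarith⟩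
  obtain ⟨H5, hH5⟩ : ∃ k : ℤ, h₅ = k := ⟨G5 - H4, by push_cast; linarith⟩
  obtain ⟨τ, hτ⟩ : ∃ τ, τ = 3 * (u - Nu) + (v - Nv) + 4/3 - 4 := ⟨_, rfl⟩
  -- `W, Z` are twice the coordinates of the translated point
  have H2 : ∀ (W Z : ℤ) (r : ℝ) (M : ℤ), Even (W + (p + p')) → Even (Z + (q + q')) →
      -(W^2 + W * Z + Z^2 : ℝ) / 12 = r + M →
      Even (M + (3 * Nu + Nv)) → T6Bad a d (σ 2) (τ + r) := by
    intro W Z r M ⟨i, hi⟩ ⟨j, hj⟩ hr ⟨g, hg⟩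
    have h := HB 2 (i + p - p') (j + q - q') (-g - 2)
    have hgr : (M : ℝ) + (3 * Nu + Nv) = g + g := by exact_mod_cast hg
    have hir : (W : ℝ) + (p + p') = i + i := by exact_mod_cast hi
    have hjr : (Z : ℝ) + (q + q') = j + j := by exact_mod_cast hj
    have e : t6_T (1/3) (1/4) (1/2) c₁ c₄ c₅ th al al' (2:ℤ) (i + p - p' : ℤ) (j + q - q' : ℤ)
        + (2:ℤ) * ((-g - 2 : ℤ) : ℝ) = τ + r := by
      have e1 : r = -(W^2 + W * Z + Z^2 : ℝ) / 12 - M := by linarith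
      have e2 : (M : ℝ) = g + g - 3 * Nu - Nv := by linarith
      have e3 : (W : ℝ) = i + i - p - p' := by linarith
      have e4 : (Z : ℝ) = j + j - q - q' := by linarith
      rw [e1, hτ, hu, hv, e2, e3, e4, ec4, ec5, eal, eal']
      push_cast
      unfold t6_T; ring
    rw [e] at h
    refine t6_bad_shift (k := H4 * (i + p - p') + H5 * (j + q - q')) ?_ h
    push_cast; rw [hH4, hH5]; ring
  have hτ1 : 4 * (d + a) - 8/3 ≤ τ := by linarith
  have hτ2 : τ ≤ a := by linarith
  have aux : ∀ W Z W' Z' : ℤ, W^2 + W * Z + Z^2 = 9 → W'^2 + W' * Z' + Z'^2 = 21 →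
      Even (W + (p + p')) → Even (Z + (q + q')) → Even (W' + (p + p')) → Even (Z' + (q + q')) →
      False := by
    intro W Z W' Z' g1 g2 o1 o2 o3 o4
    refine t6_cover (s := σ 2) (B := τ + 1/4) ha had2 (by linarith) (by linarith) ?_
    have g1r : (W : ℝ)^2 + W * Z + Z^2 = 9 := by exact_mod_cast g1
    have g2r : (W' : ℝ)^2 + W' * Z' + Z'^2 = 21 := by exact_mod_cast g2
    rcases Int.even_or_odd (3 * Nu + Nv) with ho | ho
    · refine H2 W' Z' _ (-2) o3 o4 ?_ ?_
      · rw [g2r]; push_cast; norm_num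
      · exact Even.add (by decide) ho
    · refine H2 W Z _ (-1) o1 o2 ?_ ?_
      · rw [g1r]; push_cast; norm_num
      · exact Odd.add_odd (by decide) ho
  rcases Int.even_or_odd (p + p') with hp | hp <;> rcases Int.even_or_odd (q + q') with hq | hq
  · have B1 : T6Bad a d (σ 2) (τ + 1) := by
      rcases Int.even_or_odd (3 * Nu + Nv) with ho | ho
      · refine H2 2 2 _ (-2) (Even.add (by decide) hp) (Even.add (by decide) hq) ?_ (Even.add (by decide) ho)
        push_cast; norm_num
      · refine H2 0 0 _ (-1) (Even.add (by decide) hp) (Even.add (by decide) hq) ?_ (Odd.add_odd (by decide) ho)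
        push_cast; norm_num
    have B2 : T6Bad a d (σ 2) (τ + 2/3) := by
      rcases Int.even_or_odd (3 * Nu + Nv) with ho | ho
      · refine H2 4 0 _ (-2) (Even.add (by decide) hp) (Even.add (by decide) hq) ?_ (Even.add (by decide) ho)
        push_cast; norm_num
      · refine H2 2 0 _ (-1) (Even.add (by decide) hp) (Even.add (by decide) hq) ?_ (Odd.add_odd (by decide) ho)
        push_cast; norm_num
    obtain ⟨n, z1, z2⟩ := t6_z3 (σ 2)
    have f1 : a * (9/4) ≤ a * (σ 2 + n)^2 := mul_le_mul_of_nonneg_left z1 ha.le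
    have f2 : a * (σ 2 + n)^2 ≤ a * 4 := mul_le_mul_of_nonneg_left z2 ha.le
    by_cases hx : τ + 1 - a * (σ 2 + n)^2 < d
    · exact B1 n ⟨by linarith, hx⟩
    · push Not at hx
      exact B2 n ⟨by linarith, by linarith⟩
  · exact aux 0 3 4 1 (by norm_num) (by norm_num)
      (Even.add (by decide) hp) (Odd.add_odd (by decide) hq)
      (Even.add (by decide) hp) (Odd.add_odd (by decide) hq)
  · exact aux 3 0 1 4 (by norm_num) (by norm_num)
      (Odd.add_odd (by decide) hp) (Even.add (by decide) hq)
      (Odd.add_odd (by decide) hp) (Even.add (by decide) hq)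
  · exact aux 3 (-3) 5 (-1) (by norm_num) (by norm_num)
      (Odd.add_odd (by decide) hp) (Odd.add_odd (by decide) hq)
      (Odd.add_odd (by decide) hp) (Odd.add_odd (by decide) hq)

lemma t6_main {a A t lam d c₁ c₄ c₅ th al al' h₄ h₅ : ℝ} {σ : ℤ → ℝ}
    (ha : 0 < a) (hA : 0 < A)
    (hl0 : 0 ≤ lam) (hl1 : lam ≤ 1/2) (hAC : A ≤ t + A * lam^2) (hd0 : 0 < d)
    (hd5 : d^5 = 2 * a * A * t) (had2 : 2 * a < d) (had3 : d ≤ 3 * a)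
    (hK1 : A < d + 3*a/4) (hK2 : d + 3*a/4 ≤ 2 * A) (had : a + d ≤ 1)
    (HB : ∀ e i j n : ℤ, T6Bad a d (σ e + h₄ * i + h₅ * j)
      (t6_T A t lam c₁ c₄ c₅ th al al' e i j + e * n)) : False := by
  have P := t6_core (b0 := t6_T A t lam c₁ c₄ c₅ th al al' 1 0 0)
    (b4 := al - 2 * A * (c₄ + lam * c₅))
    (b5 := al' - 2 * A * lam * (c₄ + lam * c₅) - 2 * t * c₅)
    ha hA hl0 hl1 hAC hd0 hd5 had3 hK1 hK2 had (by
      intro i j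
      refine t6_arc (s := σ 1 + h₄ * i + h₅ * j) ha had2 (fun N => ?_)
      have := HB 1 i j N
      have e : t6_T A t lam c₁ c₄ c₅ th al al' (1:ℤ) i j + (1:ℤ) * (N : ℝ) =
          t6_b A t lam (t6_T A t lam c₁ c₄ c₅ th al al' 1 0 0) (al - 2 * A * (c₄ + lam * c₅))
            (al' - 2 * A * lam * (c₄ + lam * c₅) - 2 * t * c₅) i j + N := by
        unfold t6_T t6_b; push_cast; ring
      rwa [e] at this)
  have P' := t6_core (b0 := t6_T A t lam c₁ c₄ c₅ th al al' (-1) 0 0)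
    (b4 := -al - 2 * A * (c₄ + lam * c₅))
    (b5 := -al' - 2 * A * lam * (c₄ + lam * c₅) - 2 * t * c₅)
    ha hA hl0 hl1 hAC hd0 hd5 had3 hK1 hK2 had (by
      intro i j
      refine t6_arc (s := σ (-1) + h₄ * i + h₅ * j) ha had2 (fun N => ?_)
      have := HB (-1) i j (-N)
      have e : t6_T A t lam c₁ c₄ c₅ th al al' (-1:ℤ) i j + (-1:ℤ) * ((-N : ℤ) : ℝ) =
          t6_b A t lam (t6_T A t lam c₁ c₄ c₅ th al al' (-1) 0 0)
            (-al - 2 * A * (c₄ + lam * c₅))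
            (-al' - 2 * A * lam * (c₄ + lam * c₅) - 2 * t * c₅) i j + N := by
        unfold t6_T t6_b; push_cast; ring
      rwa [e] at this)
  rcases P with ⟨e1, e2, e3, ⟨k1, hk1⟩, ⟨k2, hk2⟩⟩ |
    ⟨e1, e2, e3, ⟨k1, hk1⟩, ⟨k2, hk2⟩, ⟨k3, hk3⟩⟩
  · rcases P' with ⟨_, _, _, ⟨k1', hk1'⟩, ⟨k2', hk2'⟩⟩ | ⟨e1', _⟩
    · subst e1 e2 e3
      exact t6_case1 ha hd0 had2 had3 had (by rw [hd5]; ring)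
        ⟨k1, by linarith⟩ ⟨k1', by linarith⟩ ⟨k2, by linarith⟩ ⟨k2', by linarith⟩ HB
    · rw [e1] at e1'; norm_num at e1'
  · rcases P' with ⟨e1', _⟩ | ⟨_, _, _, ⟨k1', hk1'⟩, ⟨k2', hk2'⟩, ⟨k3', hk3'⟩⟩
    · rw [e1] at e1'; norm_num at e1'
    · subst e1 e2 e3
      exact t6_case2 (p := k1 - k3) (q := k2 - k3) (p' := k1' - k3') (q' := k2' - k3')
        ha hd0 had2 had3 (by rw [hd5]; ring)
        (by push_cast; linarith) (by push_cast; linarith) (by push_cast; linarith)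
        (by push_cast; linarith) HB

theorem thm6 (a A t lam h₄ h₅ a₂ a₃ a₄ a₅ d a₄' a₅' : ℝ) (m K : ℤ)
    (ha : 0 < a) (hA : 0 < A) (ht : 0 < t)
    (ha₂ : -1/2 < a₂ ∧ a₂ ≤ 1/2) (ha₃ : -1/2 < a₃ ∧ a₃ ≤ 1/2)
    (ha₄ : -1/2 < a₄ ∧ a₄ ≤ 1/2) (ha₅ : -1/2 < a₅ ∧ a₅ ≤ 1/2)
    (hh₄ : -1/2 < h₄ ∧ h₄ ≤ 1/2) (hh₅ : -1/2 < h₅ ∧ h₅ ≤ 1/2)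
    (hlam : 0 ≤ lam ∧ lam ≤ 1/2) (hAC : A ≤ t + A * lam^2)
    (hmin_le : ∀ u v w : ℤ, ¬(u = 0 ∧ v = 0 ∧ w = 0) →
      a ≤ redPhi a A t lam h₄ h₅ (u : ℝ) (v : ℝ) (w : ℝ))
    (hmin_eq : ∃ u v w : ℤ, ¬(u = 0 ∧ v = 0 ∧ w = 0) ∧
      redPhi a A t lam h₄ h₅ (u : ℝ) (v : ℝ) (w : ℝ) = a)
    (hd : d = (2 * a * A * t) ^ ((1 : ℝ)/5))
    (hm : (m : ℝ) < d / a ∧ d / a ≤ (m : ℝ) + 1)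
    (hK : (K : ℝ) < (d + ((m : ℝ)^2 - 1) * a / 4) / A ∧
          (d + ((m : ℝ)^2 - 1) * a / 4) / A ≤ (K : ℝ) + 1)
    (ha' : a < 1/2) (hd1 : d ≤ 1) (had : a + d ≤ 1)
    (hmK : m = 2 ∧ K = 1)
    (ha₄' : -1/2 < a₄' ∧ a₄' ≤ 1/2 ∧ ∃ n : ℤ, a₄' - (a₄ - a₃ * h₄) = (n : ℝ))
    (ha₅' : -1/2 < a₅' ∧ a₅' ≤ 1/2 ∧ ∃ n : ℤ, a₅' - (a₅ - a₃ * h₅) = (n : ℝ))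
    (c₁ c₂ c₃ c₄ c₅ : ℝ) (hc₂ : ∃ n : ℤ, (n : ℝ) = c₂)
    (hexc : ¬ (A = 1/3 ∧ t = 1/4 ∧ lam = 1/2 ∧ (∃ n : ℤ, (n : ℝ) = c₅) ∧
      (∃ n : ℤ, a₅' - a₄'/2 = (n : ℝ)) ∧ d + 6 * d^5 < 2/3)) :
    ∃ x₁ x₂ x₃ x₄ x₅ : ℝ,
      (∃ k : ℤ, x₁ - c₁ = k) ∧ (∃ k : ℤ, x₂ - c₂ = k) ∧ (∃ k : ℤ, x₃ - c₃ = k) ∧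
      (∃ k : ℤ, x₄ - c₄ = k) ∧ (∃ k : ℤ, x₅ - c₅ = k) ∧
      0 < redQ a A t lam h₄ h₅ a₂ a₃ a₄ a₅ x₁ x₂ x₃ x₄ x₅ ∧
      redQ a A t lam h₄ h₅ a₂ a₃ a₄ a₅ x₁ x₂ x₃ x₄ x₅ < d := by
  obtain ⟨rfl, rfl⟩ := hmK
  obtain ⟨c, rfl⟩ := hc₂
  push_cast at hm hK
  have hpos : 0 < 2 * a * A * t := by positivity
  have hd0 : 0 < d := by rw [hd]; exact Real.rpow_pos_of_pos hpos _
  have hd5 : d^5 = 2 * a * A * t := by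
    rw [hd, ← Real.rpow_natCast, ← Real.rpow_mul hpos.le]
    norm_num
  have had2 : 2 * a < d := by
    have := hm.1; rwa [lt_div_iff₀ ha] at this
  have had3 : d ≤ 3 * a := by
    have := hm.2; rw [div_le_iff₀ ha] at this; linarith
  have hK1 : A < d + 3*a/4 := by
    have := hK.1; rw [lt_div_iff₀ hA] at this; linarith
  have hK2 : d + 3*a/4 ≤ 2 * A := by
    have := hK.2; rw [div_le_iff₀ hA] at this; linarith
  by_contra hno
  refine t6_main (c₁ := c₁) (c₄ := c₄) (c₅ := c₅) (th := a₂ + a₃^2 / (4 * a))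
    (al := a₄ - a₃ * h₄) (al' := a₅ - a₃ * h₅) (h₄ := h₄) (h₅ := h₅)
    (σ := fun e => c₃ + h₄ * c₄ + h₅ * c₅ - e * a₃ / (2 * a))
    ha hA hlam.1 hlam.2 hAC hd0 hd5 had2 had3 hK1 hK2 had ?_
  intro e i j n k hk
  apply hno
  have key : redQ a A t lam h₄ h₅ a₂ a₃ a₄ a₅ (c₁ + n) e (c₃ + k) (c₄ + i) (c₅ + j) =
      t6_T A t lam c₁ c₄ c₅ (a₂ + a₃^2 / (4 * a)) (a₄ - a₃ * h₄) (a₅ - a₃ * h₅) e i j + e * n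
        - a * (c₃ + h₄ * c₄ + h₅ * c₅ - e * a₃ / (2 * a) + h₄ * i + h₅ * j + k)^2 := by
    unfold redQ redPhi t6_T
    field_simp
    ring
  refine ⟨c₁ + n, e, c₃ + k, c₄ + i, c₅ + j, ⟨n, by ring⟩, ⟨e - c, by push_cast; ring⟩,
    ⟨k, by ring⟩, ⟨i, by ring⟩, ⟨j, by ring⟩, ?_, ?_⟩
  · rw [key]; exact hk.1
  · rw [key]; exact hk.2
end

section
/- Theorem 5: With the reduced form Q and parameters as in the context but with d = ((32/3)·|D|)^{1/5} (so d⁵ = (8/3)aAt), and with m, K defined from this d, suppose the reals c_1, …, c_5 satisfy c_2 ∈ ℤ, and suppose a < 1/2, d ≤ 1, a + d ≤ 1, and (m, K) = (2,2). Then there exist x_1, …, x_5 with x_i − c_i ∈ ℤ for every i such that 0 < Q(x_1,…,x_5) < d. -/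
/-- The outer ternary form obtained after completing squares in `x₃` and `x₄`. -/
noncomputable def outerP (t α β : ℝ) (n : ℤ) (x₁ x₅ : ℝ) : ℝ :=
  n * x₁ + n^2 * α + n * β * x₅ - t * x₅^2

lemma ap_hit_pos (x θ j l : ℝ) (h0 : 0 < θ) (h1 : θ < l) :
    ∃ k : ℤ, j < x + k * θ ∧ x + k * θ < j + l := by
  refine ⟨⌊(j - x) / θ⌋ + 1, ?_, ?_⟩
  · have := Int.lt_floor_add_one ((j - x) / θ)
    rw [div_lt_iff₀ h0] at this
    push_cast
    linarith
  · have := Int.floor_le ((j - x) / θ)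
    rw [le_div_iff₀ h0] at this
    push_cast
    linarith

lemma ap_hit (x θ j l : ℝ) (h0 : θ ≠ 0) (h1 : |θ| < l) :
    ∃ k : ℤ, j < x + k * θ ∧ x + k * θ < j + l := by
  rcases lt_or_gt_of_ne h0 with h | h
  · obtain ⟨k, hk⟩ := ap_hit_pos x (-θ) j l (by linarith) (by rwa [abs_of_neg h] at h1)
    refine ⟨-k, ?_⟩
    push_cast
    constructor <;> nlinarith [hk.1, hk.2]
  · exact ap_hit_pos x θ j l h (by rwa [abs_of_pos h] at h1)

/-- Normalising modulo one: a value avoiding `(j, j+L)` modulo 1 has a representative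
in `[j+L-1, j]`. -/
lemma norm_mod (C j L : ℝ) (h : ∀ k : ℤ, ¬ (j < C + k ∧ C + k < j + L)) :
    ∃ k : ℤ, j + L - 1 ≤ C + k ∧ C + k ≤ j ∧ j - 1 < C + k := by
  have h1 := Int.floor_le (j - C)
  have h2 := Int.lt_floor_add_one (j - C)
  refine ⟨⌊j - C⌋, ?_, by linarith, by linarith⟩
  have h3 := h (⌊j - C⌋ + 1)
  push_cast at h3
  by_contra h4
  exact h3 ⟨by linarith, by linarith⟩

lemma drift (C b t j L : ℝ) (q p : ℤ) (hL : 1/2 < L)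
    (hbad : ∀ k k1 : ℤ, ¬ (j < C + k1 + b * k - t * k^2 ∧ C + k1 + b * k - t * k^2 < j + L))
    (h0 : 2 * t * q - p ≠ 0) (h1 : |2 * t * q - p| < 2 * L - 1) : False := by
  obtain ⟨k, hk1, hk2⟩ := ap_hit (b * q - t * q^2) (2 * t * q - p) (1 - L) (2 * L - 1) h0 h1
  -- use the index `-k`
  obtain ⟨m, hm1, hm2, -⟩ := norm_mod (C + b * (-k : ℤ) - t * ((-k : ℤ) : ℝ)^2) j L (by
    intro m; have := hbad (-k) m
    intro hh; apply this; constructor <;> linarith [hh.1, hh.2])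
  have hq := hbad (-k + q) (m + p * k * (-1) )
  have hq2 := hbad (-k + q) (m + p * k * (-1) - 1)
  push_cast at *
  have e : C + (m + p * k * (-1)) + b * (-k + q) - t * (-k + q)^2
      = (C + b * (-k) - t * (-k)^2 + m) + ((b * q - t * q^2) + k * (2 * t * q - p)) := by ring
  apply hq
  rw [e]
  constructor
  · linarith
  · by_contra hc
    push Not at hc
    apply hq2
    have e2 : C + (m + p * k * (-1) - 1) + b * (-k + q) - t * (-k + q)^2
      = (C + b * (-k) - t * (-k)^2 + m) + ((b * q - t * q^2) + k * (2 * t * q - p)) - 1 := by ring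
    rw [e2]
    constructor <;> linarith

lemma exact_int (C b t j L : ℝ) (q : ℤ) (hL : 1/2 < L)
    (hbad : ∀ k k1 : ℤ, ¬ (j < C + k1 + b * k - t * k^2 ∧ C + k1 + b * k - t * k^2 < j + L))
    (h0 : 2 * t * q = 1) : ∃ z : ℤ, b * q - q / 2 = z := by
  by_contra hz
  push Not at hz
  set κ := b * q - (q : ℝ) / 2 with hκ
  have hr := abs_sub_round κ
  obtain ⟨i, hi1, hi2⟩ := ap_hit C (κ - round κ) j L (sub_ne_zero.mpr (hz (round κ))) (by linarith)
  obtain ⟨w, hw⟩ : ∃ w : ℤ, i * i - i = 2 * w := by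
    obtain ⟨w, hw⟩ := Int.even_mul_pred_self i
    exact ⟨w, by rw [← two_mul] at hw; rw [← hw]; ring⟩
  have hw' : (i : ℝ) * i - i = 2 * w := by exact_mod_cast hw
  apply hbad (q * i) (q * w - i * round κ)
  have e : C + ((q * w - i * round κ : ℤ) : ℝ) + b * ((q * i : ℤ) : ℝ) - t * ((q * i : ℤ) : ℝ)^2
      = C + i * (κ - round κ) := by
    push_cast
    rw [hκ]
    have : t * ((q : ℝ) * i)^2 = q / 2 * (i * i) := by
      calc t * ((q : ℝ) * i)^2 = (2 * t * q) * q / 2 * (i * i) := by ring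
        _ = _ := by rw [h0]; ring
    rw [this]
    linear_combination (-(q : ℝ) / 2) * hw'
  rw [e]
  exact ⟨hi1, hi2⟩

/-- One-variable covering lemma. -/
lemma row (B l D ν y₀ : ℝ) (hB : 0 < B) (hD : 2 * B < D) (hy : |y₀| ≤ 1/2)
    (h1 : l + B * y₀^2 < ν) (h2 : ν < l + D + B * (1 + |y₀|)^2) :
    ∃ m : ℤ, l < ν - B * (y₀ + m)^2 ∧ ν - B * (y₀ + m)^2 < l + D := by
  by_cases c1 : ν < l + D + B * y₀^2
  · exact ⟨0, by push_cast; rw [add_zero]; constructor <;> linarith⟩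
  push Not at c1
  rcases le_total 0 y₀ with h | h
  · rw [abs_of_nonneg h] at hy h2
    by_cases c2 : ν < l + D + B * (1 - y₀)^2
    · refine ⟨-1, ?_⟩
      push_cast
      constructor <;> nlinarith
    · push Not at c2
      refine ⟨1, ?_⟩
      push_cast
      constructor <;> nlinarith
  · rw [abs_of_nonpos h] at hy h2
    by_cases c2 : ν < l + D + B * (1 + y₀)^2
    · refine ⟨1, ?_⟩
      push_cast
      constructor <;> nlinarith
    · push Not at c2
      refine ⟨-1, ?_⟩
      push_cast
      constructor <;> nlinarith

lemma near (x : ℝ) : ∃ m : ℤ, |x + m| ≤ 1/2 := by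
  refine ⟨-round x, ?_⟩
  push_cast
  rw [← sub_eq_add_neg]
  exact abs_sub_round x

/-- Two-variable covering lemma: the raw badness condition yields a clean interval. -/
lemma slice_bad (a A d P : ℝ) (X : ℤ → ℝ) (y : ℝ) (ha : 0 < a) (hA : 0 < A)
    (had : 2 * a < d) (hAd : 2 * A < d + 3/4 * a) (hy : |y| ≤ 1/2)
    (hraw : ∀ i m : ℤ, ¬ (0 < P - a * (X i + m)^2 - A * (y + i)^2 ∧
      P - a * (X i + m)^2 - A * (y + i)^2 < d)) :
    ¬ (a/4 + A * y^2 < P ∧ P < d + a + A * (1 + |y|)^2) := by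
  rintro ⟨h1, h2⟩
  obtain ⟨i, hi1, hi2⟩ := row A (a/4) (d + 3/4 * a) P y hA hAd hy h1 (by linarith)
  obtain ⟨m, hm⟩ := near (X i)
  have hsq : (X i + m)^2 ≤ 1/4 := by
    have := abs_le.mp hm; nlinarith
  obtain ⟨m', h3, h4⟩ := row a 0 d (P - A * (y + i)^2) (X i + m) ha had hm
    (by nlinarith) (by
      have h1sq : 1 ≤ (1 + |X i + m|)^2 := by nlinarith [abs_nonneg (X i + m)]
      nlinarith)
  apply hraw i (m + m')
  push_cast
  rw [← add_assoc]
  constructor <;> linarith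

/-- Numerical hypotheses available in the case `(m,K) = (2,2)`. -/
structure NumHyp (a A t d : ℝ) : Prop where
  d0 : 0 < d
  d1 : d ≤ 1
  a2 : 2 * a < d
  a3 : d ≤ 3 * a
  A2 : 2 * A < d + 3/4 * a
  A3 : d + 3/4 * a ≤ 3 * A
  d5 : d^5 = 8/3 * a * A * t
  tA : 3/4 * A ≤ t

namespace NumHyp
variable {a A t d : ℝ}

lemma a0 (h : NumHyp a A t d) : 0 < a := by linarith [h.d0, h.a3]
lemma Ad (h : NumHyp a A t d) : 5/12 * d ≤ A := by linarith [h.A3, h.a3]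
lemma A0 (h : NumHyp a A t d) : 0 < A := by linarith [h.d0, h.Ad]
lemma td (h : NumHyp a A t d) : 5/16 * d ≤ t := by linarith [h.tA, h.Ad]
lemma t0 (h : NumHyp a A t d) : 0 < t := by linarith [h.d0, h.td]
lemma aA (h : NumHyp a A t d) : 5/36 * d^2 ≤ a * A := by
  have := h.d0; have := h.a3; have := h.Ad; have := h.a0
  nlinarith [mul_nonneg (by linarith : 0 ≤ a - d/3) h.A0.le]
lemma t27 (h : NumHyp a A t d) : t ≤ 27/10 * d^3 := by
  have h1 := h.aA
  have h2 := h.d5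
  have h3 : 8/3 * (5/36 * d^2) * t ≤ d^5 := by
    rw [h2]; nlinarith [h.t0]
  have h4 : d^2 * t ≤ d^2 * (27/10 * d^3) := by nlinarith
  exact le_of_mul_le_mul_left h4 (by have := h.d0; positivity)
lemma d34 (h : NumHyp a A t d) : 34/100 ≤ d := by
  have h1 := h.td
  have h2 := h.t27
  have h0 := h.d0
  have h3 : d * (5/16) ≤ d * (27/10 * d^2) := by nlinarith
  have h4 := le_of_mul_le_mul_left h3 h0
  nlinarith
lemma Ld (h : NumHyp a A t d) : 25/16 * d ≤ d + 3/4 * (a + A) := by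
  linarith [h.a3, h.Ad]
end NumHyp

lemma run_aux (C s t j L : ℝ) (hs0 : 0 ≤ s) (hs : s ≤ 1/2) (ht : 0 < t) (h4 : 4 * t < L)
    (h53 : 53/100 ≤ L) (h6 : 1 < L + 6 * t)
    (hb : ∀ i k : ℤ, ¬ (j < C + k - t * (s + i)^2 ∧ C + k - t * (s + i)^2 < j + L)) : False := by
  obtain ⟨k, hk1, hk2, -⟩ := norm_mod (C - t * s^2) j L (by
    intro k hk
    apply hb 0 k
    push_cast
    rw [add_zero]
    constructor <;> linarith [hk.1, hk.2])
  have step : ∀ i : ℤ, j < C + (k + 1) - t * (s + i)^2 → j + L ≤ C + (k + 1) - t * (s + i)^2 := by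
    intro i hi
    by_contra hc
    apply hb i (k + 1)
    push_cast
    exact ⟨hi, by linarith⟩
  have hts : 0 ≤ t * s := by positivity
  have hts2 : t * s ≤ t / 2 := by nlinarith
  have s1 := step (-1) (by push_cast; nlinarith)
  have s2 := step 1 (by push_cast at *; nlinarith)
  have s3 := step (-2) (by push_cast at *; nlinarith)
  have s4 := step 2 (by push_cast at *; nlinarith)
  push_cast at s1 s2 s3 s4
  have hf : L + 4 * t + 4 * (t * s) ≤ 1 := by nlinarith
  by_cases hc : 5 * t - 10 * (t * s) < L
  · have s5 := step (-3) (by push_cast; nlinarith)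
    push_cast at s5
    nlinarith
  · push Not at hc
    apply hb (-4) (k + 2)
    push_cast
    constructor <;> nlinarith

lemma run (C b t j L : ℝ) (ht : 0 < t) (h4 : 4 * t < L)
    (h53 : 53/100 ≤ L) (h6 : 1 < L + 6 * t)
    (hbad : ∀ k k1 : ℤ, ¬ (j < C + k1 + b * k - t * k^2 ∧ C + k1 + b * k - t * k^2 < j + L)) :
    False := by
  obtain ⟨k0, hk0⟩ := near (- (b / (2 * t)))
  set u := - (b / (2 * t)) + k0 with hu
  have hb : b = 2 * t * (k0 - u) := by
    rw [hu]; field_simp; ring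
  have key : ∀ i k1 : ℤ, C + k1 + b * ((k0 + i : ℤ) : ℝ) - t * ((k0 + i : ℤ) : ℝ)^2
      = (C + t * (k0 - u)^2) + k1 - t * (u + i)^2 := by
    intro i k1
    push_cast
    rw [hb]; ring
  rcases le_total 0 u with h | h
  · rw [abs_of_nonneg h] at hk0
    refine run_aux (C + t * (k0 - u)^2) u t j L h hk0 ht h4 h53 h6 ?_
    intro i k
    rw [← key]
    exact hbad _ _
  · rw [abs_of_nonpos h] at hk0
    refine run_aux (C + t * (k0 - u)^2) (-u) t j L (by linarith) hk0 ht h4 h53 h6 ?_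
    intro i k
    have e : (-u + (i : ℝ))^2 = (u + ((-i : ℤ) : ℝ))^2 := by push_cast; ring
    rw [e, ← key]
    exact hbad _ _

lemma nonexc {a A t d : ℝ} (h : NumHyp a A t d) (C b j L : ℝ) (hLdef : L = d + 3/4 * (a + A))
    (hbad : ∀ k k1 : ℤ, ¬ (j < C + k1 + b * k - t * k^2 ∧ C + k1 + b * k - t * k^2 < j + L)) :
    L ≤ 1 ∧ (t = 1/2 ∨ (t = 1/4 ∧ L ≤ 3/4) ∨ (t = 1/6 ∧ L ≤ 2/3)) := by
  have hLd := h.Ld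
  rw [← hLdef] at hLd
  have hd := h.d34
  have hd0 := h.d0
  have ht := h.td
  have htt := h.t27
  have ht0 := h.t0
  have hL1 : L ≤ 1 := by
    obtain ⟨k, h1, h2, -⟩ := norm_mod C j L (by
      intro k hk; apply hbad 0 k; push_cast; constructor <;> linarith [hk.1, hk.2])
    linarith
  refine ⟨hL1, ?_⟩
  have hL53 : 53/100 ≤ L := by linarith
  have hd64 : d ≤ 16/25 := by linarith
  have hcube : ∀ e : ℝ, d ≤ e → t ≤ 27/10 * (e^2 * d) := by
    intro e he
    have : d^2 ≤ e^2 := by nlinarith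
    nlinarith
  by_cases c1 : 1 < L + t
  · left
    by_contra hne
    have := hcube _ hd64
    refine drift C b t j L 1 1 (by linarith) hbad ?_ ?_
    · push_cast; intro hh; apply hne; linarith
    · push_cast; rw [abs_lt]; constructor <;> linarith
  push Not at c1
  by_cases c2 : 1 < L + 2 * t
  · right; left
    have hd2 : d ≤ 16/30 := by linarith
    have := hcube _ hd2
    have ht4 : t = 1/4 := by
      by_contra hne
      refine drift C b t j L 2 1 (by linarith) hbad ?_ ?_
      · push_cast; intro hh; apply hne; linarith
      · push_cast; rw [abs_lt]; constructor <;> linarith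
    exact ⟨ht4, by linarith⟩
  push Not at c2
  by_cases c3 : 1 < L + 3 * t
  · right; right
    have h3t : 3 * t < L := by
      by_cases c : 3/5 < L
      · linarith
      · have := hcube (384/1000) (by linarith)
        linarith
    have ht4 : t = 1/6 := by
      by_contra hne
      refine drift C b t j L 3 1 (by linarith) hbad ?_ ?_
      · push_cast; intro hh; apply hne; linarith
      · push_cast; rw [abs_lt]; constructor <;> linarith
    exact ⟨ht4, by linarith⟩
  push Not at c3
  exfalso
  have h4t : 4 * t < L := by
    by_cases c : 4/7 < L
    · linarith
    · have := hcube (3658/10000) (by linarith)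
      linarith
  exact run C b t j L ht0 h4t hL53 (by linarith) hbad

/-- Failure of the theorem, after completing squares. -/
def RawBad (a A t d lam α β μ c₁ c₄ c₅ : ℝ) : Prop :=
  ∀ (n : ℤ) (x₅ y : ℝ), (∃ k : ℤ, x₅ = c₅ + k) → (∃ k : ℤ, y = c₄ + lam * x₅ - μ * n + k) →
    ∃ X : ℝ, ∀ x₁ : ℝ, (∃ k : ℤ, x₁ = c₁ + k) → ∀ m : ℤ,
      ¬ (0 < outerP t α β n x₁ x₅ - a * (X + m)^2 - A * y^2 ∧
        outerP t α β n x₁ x₅ - a * (X + m)^2 - A * y^2 < d)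

lemma key {a A t d lam α β μ c₁ c₄ c₅ : ℝ} (h : NumHyp a A t d)
    (H : RawBad a A t d lam α β μ c₁ c₄ c₅) (n : ℤ) (x₁ x₅ y : ℝ)
    (h1 : ∃ k : ℤ, x₁ = c₁ + k) (h5 : ∃ k : ℤ, x₅ = c₅ + k)
    (hy : ∃ k : ℤ, y = c₄ + lam * x₅ - μ * n + k) (hy2 : |y| ≤ 1/2) :
    ¬ (a/4 + A * y^2 < outerP t α β n x₁ x₅ ∧
      outerP t α β n x₁ x₅ < d + a + A * (1 + |y|)^2) := by
  obtain ⟨k, hk⟩ := hy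
  choose X hX using fun i : ℤ => H n x₅ (y + i) h5 ⟨k + i, by push_cast; rw [hk]; ring⟩
  exact slice_bad a A d _ X y h.a0 h.A0 h.a2 h.A2 hy2 (fun i m => hX i x₁ h1 m)

lemma exists_y (lam μ c₄ x₅ : ℝ) (n : ℤ) :
    ∃ y : ℝ, (∃ k : ℤ, y = c₄ + lam * x₅ - μ * n + k) ∧ |y| ≤ 1/2 := by
  obtain ⟨m, hm⟩ := near (c₄ + lam * x₅ - μ * n)
  exact ⟨_, ⟨m, rfl⟩, hm⟩

lemma bad0 {a A t d lam α β μ c₁ c₄ c₅ : ℝ} (h : NumHyp a A t d)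
    (H : RawBad a A t d lam α β μ c₁ c₄ c₅) (n : ℤ) (x₁ x₅ : ℝ)
    (h1 : ∃ k : ℤ, x₁ = c₁ + k) (h5 : ∃ k : ℤ, x₅ = c₅ + k) :
    ¬ ((a + A)/4 < outerP t α β n x₁ x₅ ∧ outerP t α β n x₁ x₅ < d + a + A) := by
  obtain ⟨y, hy, hy2⟩ := exists_y lam μ c₄ x₅ n
  intro hh
  apply key h H n x₁ x₅ y h1 h5 hy hy2
  have hA := h.A0
  have h1 := abs_le.mp hy2
  have h2 : y^2 ≤ 1/4 := by nlinarith
  have h3 : 1 ≤ (1 + |y|)^2 := by nlinarith [abs_nonneg y]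
  constructor <;> nlinarith

lemma bad_n1 {a A t d lam α β μ c₁ c₄ c₅ : ℝ} (h : NumHyp a A t d)
    (H : RawBad a A t d lam α β μ c₁ c₄ c₅) (k k1 : ℤ) :
    ¬ ((a + A)/4 < (c₁ + α + β * c₅ - t * c₅^2) + k1 + (β - 2 * t * c₅) * k - t * k^2 ∧
      (c₁ + α + β * c₅ - t * c₅^2) + k1 + (β - 2 * t * c₅) * k - t * k^2
        < (a + A)/4 + (d + 3/4 * (a + A))) := by
  have := bad0 h H 1 (c₁ + k1) (c₅ + k) ⟨k1, rfl⟩ ⟨k, rfl⟩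
  intro hh
  apply this
  unfold outerP
  push_cast
  constructor <;> linarith [hh.1, hh.2]

lemma bad_n2 {a A t d lam α β μ c₁ c₄ c₅ : ℝ} (h : NumHyp a A t d)
    (H : RawBad a A t d lam α β μ c₁ c₄ c₅) (k k1 : ℤ) :
    ¬ ((a + A)/4 < (-c₁ + α - β * c₅ - t * c₅^2) + k1 + (-β - 2 * t * c₅) * k - t * k^2 ∧
      (-c₁ + α - β * c₅ - t * c₅^2) + k1 + (-β - 2 * t * c₅) * k - t * k^2
        < (a + A)/4 + (d + 3/4 * (a + A))) := by
  have := bad0 h H (-1) (c₁ + (-k1 : ℤ)) (c₅ + k) ⟨-k1, rfl⟩ ⟨k, rfl⟩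
  intro hh
  apply this
  unfold outerP
  push_cast
  constructor <;> linarith [hh.1, hh.2]

lemma exc_setup {a A t d lam α β μ c₁ c₄ c₅ : ℝ} (h : NumHyp a A t d)
    (H : RawBad a A t d lam α β μ c₁ c₄ c₅) (q w w' : ℤ) (δ : ℝ) (hq : 2 * t * q = 1)
    (hw : (q : ℝ) / 2 - q * δ = w) (hw' : (q : ℝ) / 2 + q * δ = w') :
    ∃ r v v' : ℝ, (∃ k : ℤ, r = c₅ + k) ∧ (∃ k : ℤ, -r = c₅ + k) ∧
      (∀ k j : ℤ, ∃ x₁ : ℝ, (∃ i : ℤ, x₁ = c₁ + i) ∧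
        outerP t α β 1 x₁ (r + j) = v + k + j * δ - t * j^2) ∧
      (∀ k j : ℤ, ∃ x₁ : ℝ, (∃ i : ℤ, x₁ = c₁ + i) ∧
        outerP t α β (-1) x₁ (-r + j) = v' + k - j * δ - t * j^2) ∧
      (∀ l : ℤ, ¬ ((a + A)/4 < (2 * l + 1) * ((l + 1) * v + l * v') ∧
        (2 * l + 1) * ((l + 1) * v + l * v') < d + a + A)) ∧
      (v ≤ (a + A)/4 ∧ d + a + A ≤ v + 1) ∧ (v' ≤ (a + A)/4 ∧ d + a + A ≤ v' + 1) := by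
  have hd := h.d34
  have hLd := h.Ld
  obtain ⟨z, hz⟩ := exact_int _ _ t _ _ q (by linarith) (bad_n1 h H) hq
  obtain ⟨z', hz'⟩ := exact_int _ _ t _ _ q (by linarith) (bad_n2 h H) hq
  set r := q * β - q * δ with hr
  have hr1 : r = c₅ + ((w + z : ℤ) : ℝ) := by
    push_cast
    rw [← hw, ← hz, hr]
    linear_combination c₅ * hq
  have hr2 : -r = c₅ + ((w' + z' : ℤ) : ℝ) := by
    push_cast
    rw [← hw', ← hz', hr]
    linear_combination c₅ * hq
  have hβ : β = 2 * t * r + δ := by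
    rw [hr]; linear_combination (δ - β) * hq
  set α' := α + β * r - t * r^2 with hα'
  have hP : ∀ (n : ℤ) (x j : ℝ), outerP t α β n x (n * r + j)
      = n * x + n^2 * α' + n * j * δ - t * j^2 := by
    intro n x j
    unfold outerP
    rw [hα']
    linear_combination (n * j : ℝ) * hβ
  obtain ⟨k, hk1, hk2, -⟩ := norm_mod (c₁ + α') ((a + A)/4) (d + 3/4 * (a + A)) (by
    intro k hk
    have := bad0 h H 1 (c₁ + k) r ⟨k, rfl⟩ ⟨_, hr1⟩
    have e := hP 1 (c₁ + k) 0
    push_cast at e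
    rw [one_mul, add_zero] at e
    apply this
    rw [e]
    constructor <;> linarith [hk.1, hk.2])
  obtain ⟨k', hk1', hk2', -⟩ := norm_mod (-c₁ + α') ((a + A)/4) (d + 3/4 * (a + A)) (by
    intro k hk
    have := bad0 h H (-1) (c₁ + (-k : ℤ)) (-r) ⟨-k, rfl⟩ ⟨_, hr2⟩
    have e := hP (-1) (c₁ + (-k : ℤ)) 0
    push_cast at e this
    rw [neg_one_mul, add_zero] at e
    apply this
    rw [e]
    constructor <;> linarith [hk.1, hk.2])
  refine ⟨r, c₁ + α' + k, -c₁ + α' + k', ⟨_, hr1⟩, ⟨_, hr2⟩, ?_, ?_, ?_,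
    ⟨by linarith, by linarith⟩, ⟨by linarith, by linarith⟩⟩
  · intro i j
    refine ⟨c₁ + ((k + i : ℤ) : ℝ), ⟨_, rfl⟩, ?_⟩
    have e := hP 1 (c₁ + ((k + i : ℤ) : ℝ)) j
    push_cast at e ⊢
    rw [one_mul] at e
    rw [e]; ring
  · intro i j
    refine ⟨c₁ + ((-k' - i : ℤ) : ℝ), ⟨_, rfl⟩, ?_⟩
    have e := hP (-1) (c₁ + ((-k' - i : ℤ) : ℝ)) j
    push_cast at e ⊢
    rw [neg_one_mul] at e
    rw [e]; ring
  · intro l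
    have hb := bad0 h H (2 * l + 1) (c₁ + (((l + 1) * k + l * k' : ℤ) : ℝ))
      (((2 * l + 1 : ℤ) : ℝ) * r + 0) ⟨_, rfl⟩
      ⟨(w + z) + l * ((w + z) - (w' + z')), by
        push_cast at hr1 hr2 ⊢
        linear_combination ((l : ℝ) + 1) * hr1 - l * hr2⟩
    rw [hP] at hb
    push_cast at hb
    intro hh
    apply hb
    constructor <;> linarith [hh.1, hh.2]

lemma NumHyp.aA2 {a A t d : ℝ} (h : NumHyp a A t d) (hs : d ≤ 5/4 * (a + A)) :
    7/45 * d^2 ≤ a * A := by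
  have h1 := h.a3
  have h2 := h.A3
  have h0 := h.d0
  have ha := h.a0
  by_cases c : a ≤ 28/75 * d
  · have : a * (4/5 * d - a) ≤ a * A := by nlinarith
    nlinarith [mul_nonneg (by linarith : 0 ≤ a - d/3) (by linarith : 0 ≤ 28/75 * d - a)]
  · push Not at c
    have : a * (d/3 + a/4) ≤ a * A := by nlinarith
    nlinarith

lemma exc4 {a A t d lam α β μ c₁ c₄ c₅ : ℝ} (h : NumHyp a A t d)
    (H : RawBad a A t d lam α β μ c₁ c₄ c₅) (ht : t = 1/4)
    (hL : d + 3/4 * (a + A) ≤ 3/4) : False := by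
  obtain ⟨r, v, v', hr, hr', hP, hP', hV, ⟨hv1, hv2⟩, ⟨hv1', hv2'⟩⟩ :=
    exc_setup h H 2 1 1 0 (by rw [ht]; norm_num) (by norm_num) (by norm_num)
  obtain ⟨k, hk⟩ := hr
  obtain ⟨k', hk'⟩ := hr'
  have hd0 := h.d0
  have hd := h.d34
  have hLd := h.Ld
  have g1 : d + a + A ≤ v + 3/4 := by
    obtain ⟨x₁, hx, e⟩ := hP 1 1
    have := bad0 h H 1 x₁ (r + (1 : ℤ)) hx ⟨k + 1, by rw [hk]; push_cast; ring⟩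
    by_contra hc
    apply this
    rw [e, ht]
    push_cast
    constructor <;> linarith
  have g2 : d + a + A ≤ v' + 3/4 := by
    obtain ⟨x₁, hx, e⟩ := hP' 1 1
    have := bad0 h H (-1) x₁ (-r + (1 : ℤ)) hx ⟨k' + 1, by rw [hk']; push_cast; ring⟩
    by_contra hc
    apply this
    rw [e, ht]
    push_cast
    constructor <;> linarith
  have hV3 := hV 1
  push_cast at hV3
  have hd45 : 452/1000 < d := by
    have := h.t27
    by_contra hc
    push Not at hc
    have : d^3 ≤ (452/1000)^3 := by gcongr
    norm_num at *
    linarith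
  have hs : 5/4 * (a + A) < d := by
    by_contra hc
    push Not at hc
    have h1 := h.aA2 hc
    have h2 := h.d5
    rw [ht] at h2
    have h3 : d^2 * (7/45) ≤ d^2 * (3/2 * d^3) := by nlinarith
    have h4 := le_of_mul_le_mul_left h3 (by positivity)
    have h5 : d ≤ 46875/100000 := by linarith
    have : d^3 ≤ (46875/100000)^3 := by gcongr
    norm_num at *
    linarith
  have := h.a3
  have := h.Ad
  apply hV3
  constructor <;> linarith

set_option maxHeartbeats 1000000 in
lemma exc6 {a A t d lam α β μ c₁ c₄ c₅ : ℝ} (h : NumHyp a A t d)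
    (H : RawBad a A t d lam α β μ c₁ c₄ c₅) (hlam0 : 0 ≤ lam) (hlam1 : lam ≤ 1/2)
    (hAC : A ≤ t + A * lam^2) (ht : t = 1/6)
    (hL : d + 3/4 * (a + A) ≤ 2/3) : False := by
  obtain ⟨r, v, v', hr, hr', hP, hP', hV, ⟨hv1, hv2⟩, ⟨hv1', hv2'⟩⟩ :=
    exc_setup h H 3 1 2 (1/6) (by rw [ht]; norm_num) (by norm_num) (by norm_num)
  obtain ⟨k, hk⟩ := hr
  obtain ⟨k', hk'⟩ := hr'
  have hd0 := h.d0
  have hA0 := h.A0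
  have hd := h.d34
  have hLd := h.Ld
  have g1 : d + a + A ≤ v + 2/3 := by
    obtain ⟨x₁, hx, e⟩ := hP 1 (-1)
    have := bad0 h H 1 x₁ (r + (-1 : ℤ)) hx ⟨k - 1, by rw [hk]; push_cast; ring⟩
    by_contra hc
    apply this
    rw [e, ht]
    push_cast
    constructor <;> linarith
  have g2 : d + a + A ≤ v' + 2/3 := by
    obtain ⟨x₁, hx, e⟩ := hP' 1 1
    have := bad0 h H (-1) x₁ (-r + (1 : ℤ)) hx ⟨k' + 1, by rw [hk']; push_cast; ring⟩
    by_contra hc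
    apply this
    rw [e, ht]
    push_cast
    constructor <;> linarith
  have hV3 := hV 1
  push_cast at hV3
  have hd39 : 395/1000 < d := by
    have := h.t27
    by_contra hc
    push Not at hc
    have : d^3 ≤ (395/1000)^3 := by gcongr
    norm_num at *
    linarith
  have ha3 := h.a3
  have hAd := h.Ad
  by_cases hs : 5/4 * (a + A) < d
  · apply hV3
    constructor <;> linarith
  push Not at hs
  have hd41 : 4104/10000 < d := by
    have h1 := h.aA2 hs
    have h2 := h.d5
    rw [ht] at h2
    have h3 : d^2 * (7/45) ≤ d^2 * (9/4 * d^3) := by nlinarith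
    have h4 := le_of_mul_le_mul_left h3 (by positivity)
    by_contra hc
    push Not at hc
    have : d^3 ≤ (4104/10000)^3 := by gcongr
    norm_num at *
    linarith
  have hA175 : 175/1000 < A := by linarith [h.A3]
  have hlam : 21/100 < lam := by
    by_contra hc
    push Not at hc
    have : lam^2 ≤ (21/100)^2 := by gcongr
    rw [ht] at hAC
    nlinarith
  have hv3 : (a + A)/4 - 102/10000 ≤ v := by linarith
  obtain ⟨y₀, ⟨i₀, hy₀⟩, hy₀'⟩ := exists_y lam μ c₄ r 1
  obtain ⟨y₁, ⟨i₁, hy₁⟩, hy₁'⟩ := exists_y lam μ c₄ (r + (1 : ℤ)) 1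
  have q0 : v ≤ a/4 + A * y₀^2 := by
    obtain ⟨x₁, hx, e⟩ := hP 0 0
    push_cast at e
    rw [add_zero] at e
    have := key h H 1 x₁ r y₀ hx ⟨k, hk⟩ ⟨i₀, hy₀⟩ hy₀'
    by_contra hc
    apply this
    rw [e]
    have h3 : 1 ≤ (1 + |y₀|)^2 := by nlinarith [abs_nonneg y₀]
    have h3A := mul_le_mul_of_nonneg_left h3 hA0.le
    constructor <;> linarith
  have q1 : v ≤ a/4 + A * y₁^2 := by
    obtain ⟨x₁, hx, e⟩ := hP 0 1
    have := key h H 1 x₁ (r + (1 : ℤ)) y₁ hx ⟨k + 1, by rw [hk]; push_cast; ring⟩ ⟨i₁, hy₁⟩ hy₁'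
    by_contra hc
    apply this
    rw [e, ht]
    push_cast
    have h3 : 1 ≤ (1 + |y₁|)^2 := by nlinarith [abs_nonneg y₁]
    have h3A := mul_le_mul_of_nonneg_left h3 hA0.le
    constructor <;> linarith
  have ey : y₁ = y₀ + lam + ((i₁ - i₀ : ℤ) : ℝ) := by
    push_cast at hy₀ hy₁ ⊢
    rw [hy₀, hy₁]; ring
  have big : ∀ y : ℝ, |y| ≤ 1/2 → v ≤ a/4 + A * y^2 →
      (43/100 < y ∧ y ≤ 1/2) ∨ (-(1/2) ≤ y ∧ y < -(43/100)) := by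
    intro y hy hq
    have hy' := abs_le.mp hy
    by_contra hc
    have : |y| ≤ 43/100 := by
      rw [abs_le]
      by_contra hc2
      apply hc
      by_cases c : 43/100 < y
      · exact Or.inl ⟨c, hy'.2⟩
      · right
        refine ⟨hy'.1, ?_⟩
        by_contra c2
        exact hc2 ⟨by linarith, by linarith⟩
    have h2 : y^2 ≤ (43/100)^2 := by
      rw [← sq_abs]; gcongr
    nlinarith
  generalize i₁ - i₀ = z at ey
  have zc : z ≤ -2 ∨ z = -1 ∨ z = 0 ∨ 1 ≤ z := by omega
  have b0 := big y₀ hy₀' q0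
  have b1 := big y₁ hy₁' q1
  rcases zc with hz | hz | hz | hz
  · have : (z : ℝ) ≤ -2 := by exact_mod_cast hz
    rcases b0 with b0 | b0 <;> rcases b1 with b1 | b1 <;> linarith
  · subst hz
    push_cast at ey
    rcases b0 with b0 | b0 <;> rcases b1 with b1 | b1 <;> linarith
  · subst hz
    push_cast at ey
    rcases b0 with b0 | b0 <;> rcases b1 with b1 | b1 <;> linarith
  · have : (1 : ℝ) ≤ z := by exact_mod_cast hz
    rcases b0 with b0 | b0 <;> rcases b1 with b1 | b1 <;> linarith

lemma far_pt {a A t d : ℝ} (h : NumHyp a A t d) (hd : 5699/10000 ≤ d) (v Y X : ℝ)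
    (hv : v ≤ 3/1000) (hY : A ≤ Y) (h1 : d + a + Y ≤ 1 + v)
    (raw : ∀ k m : ℤ, 1 ≤ k → ¬ (0 < v + k - a * (X + m)^2 - Y ∧ v + k - a * (X + m)^2 - Y < d)) :
    False := by
  have ha3 := h.a3
  have ha2 := h.a2
  have hAd := h.Ad
  have ha0 := h.a0
  have main : ∀ s : ℝ, 0 ≤ s → s ≤ 1/2 →
      ¬ (0 < v + 1 - a * (1 + s)^2 - Y ∧ v + 1 - a * (1 + s)^2 - Y < d) →
      ¬ (0 < v + 2 - a * (3 - s)^2 - Y ∧ v + 2 - a * (3 - s)^2 - Y < d) → False := by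
    intro s hs0 hs r1 r2
    have e1 : d ≤ v + 1 - a * (1 + s)^2 - Y := by
      by_contra hc
      apply r1
      constructor
      · nlinarith
      · linarith
    have hs2 : s ≤ 2/100 := by
      by_contra hc
      push Not at hc
      have : (102/100)^2 ≤ (1 + s)^2 := by gcongr; linarith
      nlinarith
    apply r2
    constructor
    · nlinarith [mul_nonneg ha0.le hs0]
    · have : (298/100)^2 ≤ (3 - s)^2 := by gcongr; linarith
      nlinarith
  obtain ⟨m, hm⟩ := near X
  rcases le_total 0 (X + m) with hx | hx
  · rw [abs_of_nonneg hx] at hm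
    have r1 := raw 1 (m + 1) (by norm_num)
    have r2 := raw 2 (m - 3) (by norm_num)
    refine main (X + m) hx hm ?_ ?_
    · push_cast at r1
      rwa [show X + (m + 1 : ℝ) = 1 + (X + m) by ring] at r1
    · push_cast at r2
      rwa [show (X + (m - 3 : ℝ))^2 = (3 - (X + m))^2 by ring] at r2
  · rw [abs_of_nonpos hx] at hm
    have r1 := raw 1 (m - 1) (by norm_num)
    have r2 := raw 2 (m + 3) (by norm_num)
    refine main (-(X + m)) (by linarith) hm ?_ ?_
    · push_cast at r1
      rwa [show (X + (m - 1 : ℝ))^2 = (1 + -(X + m))^2 by ring] at r1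
    · push_cast at r2
      rwa [show (X + (m + 3 : ℝ))^2 = (3 - -(X + m))^2 by ring] at r2

set_option maxHeartbeats 1000000 in
/-- One slice in the case `t = 1/2`. -/
lemma slice2 {a A t d lam α β μ c₁ c₄ c₅ : ℝ} (h : NumHyp a A t d)
    (hd : 5699/10000 ≤ d)
    (H : RawBad a A t d lam α β μ c₁ c₄ c₅) (n : ℤ) (x₅ v : ℝ) (hx₅ : ∃ k : ℤ, x₅ = c₅ + k)
    (hv1 : v ≤ (a + A)/4) (hv2 : d + a + A ≤ v + 1)
    (hP : ∀ k : ℤ, ∃ x₁ : ℝ, (∃ i : ℤ, x₁ = c₁ + i) ∧ outerP t α β n x₁ x₅ = v + k) :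
    3/1000 < v ∧ v ≤ a/4 + 12/1000 * A ∧ d + 3/4 * a + A ≤ 1 := by
  obtain ⟨y, ⟨i, hy⟩, hy'⟩ := exists_y lam μ c₄ x₅ n
  have hA0 := h.A0
  have ha3 := h.a3
  have ha0 := h.a0
  have hAd := h.Ad
  have hy0 := abs_nonneg y
  have h3 : 1 ≤ (1 + |y|)^2 := by nlinarith
  have hy2 : y^2 = |y|^2 := (sq_abs y).symm
  have hq : y^2 ≤ 1/4 := by rw [hy2]; nlinarith
  have h3A := mul_le_mul_of_nonneg_left h3 hA0.le
  have hqA := mul_le_mul_of_nonneg_left hq hA0.le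
  have q0 : v ≤ a/4 + A * y^2 := by
    obtain ⟨x₁, hx, e⟩ := hP 0
    push_cast at e
    rw [add_zero] at e
    have := key h H n x₁ x₅ y hx hx₅ ⟨i, hy⟩ hy'
    by_contra hc
    apply this
    rw [e]
    constructor
    · linarith
    · linarith
  have q1 : d + a + A * (1 + |y|)^2 ≤ v + 1 := by
    obtain ⟨x₁, hx, e⟩ := hP 1
    push_cast at e
    have := key h H n x₁ x₅ y hx hx₅ ⟨i, hy⟩ hy'
    by_contra hc
    apply this
    rw [e]
    constructor
    · linarith
    · linarith
  have q2 : d + 3/4 * a + A + 2 * (A * |y|) ≤ 1 := by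
    rw [hy2] at q0; nlinarith
  have hAy : 0 ≤ A * |y| := by positivity
  have hy3 : |y| ≤ 107/1000 := by
    by_contra hc
    push Not at hc
    have : A * (107/1000) ≤ A * |y| := by gcongr
    linarith
  have hy4 : y^2 ≤ 12/1000 := by rw [hy2]; nlinarith
  have hy4A := mul_le_mul_of_nonneg_left hy4 hA0.le
  refine ⟨?_, by linarith, by linarith⟩
  by_contra hc
  push Not at hc
  obtain ⟨σ, hσ⟩ : ∃ σ : ℤ, (y + σ)^2 = (1 + |y|)^2 := by
    rcases le_total 0 y with h0 | h0
    · exact ⟨1, by rw [abs_of_nonneg h0]; push_cast; ring⟩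
    · exact ⟨-1, by rw [abs_of_nonpos h0]; push_cast; ring⟩
  obtain ⟨X, hX⟩ := H n x₅ (y + σ) hx₅ ⟨i + σ, by rw [hy]; push_cast; ring⟩
  refine far_pt h hd v (A * (1 + |y|)^2) X hc (by linarith) (by linarith) ?_
  intro k m _
  obtain ⟨x₁, hx, e⟩ := hP k
  have := hX x₁ hx m
  rwa [e, hσ] at this

lemma exc2 {a A t d lam α β μ c₁ c₄ c₅ : ℝ} (h : NumHyp a A t d)
    (H : RawBad a A t d lam α β μ c₁ c₄ c₅) (ht : t = 1/2) : False := by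
  obtain ⟨r, v, v', hr, hr', hP, hP', hV, ⟨hv1, hv2⟩, ⟨hv1', hv2'⟩⟩ :=
    exc_setup h H 1 0 1 (1/2) (by rw [ht]; norm_num) (by norm_num) (by norm_num)
  have hd : 5699/10000 ≤ d := by
    have := h.t27
    have := h.d0
    by_contra hc
    push Not at hc
    have : d^3 ≤ (5699/10000)^3 := by gcongr
    norm_num at *
    linarith
  obtain ⟨p1, p2, p3⟩ := slice2 h hd H 1 r v hr hv1 hv2 (by
    intro k
    obtain ⟨x₁, hx, e⟩ := hP k 0
    refine ⟨x₁, hx, ?_⟩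
    push_cast at e
    rw [add_zero] at e
    rw [e]; ring)
  obtain ⟨p1', p2', -⟩ := slice2 h hd H (-1) (-r) v' hr' hv1' hv2' (by
    intro k
    obtain ⟨x₁, hx, e⟩ := hP' k 0
    refine ⟨x₁, hx, ?_⟩
    push_cast at e
    rw [add_zero] at e
    rw [e]; ring)
  have ha0 := h.a0
  have hA0 := h.A0
  have ha2 := h.a2
  have h3 := hV 1
  have h5 := hV 2
  have h7 := hV 3
  push_cast at h3 h5 h7
  have g3 : 3 * (2 * v + v') ≤ (a + A)/4 := by
    by_contra hc
    apply h3
    constructor <;> linarith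
  have g5 : 5 * (3 * v + 2 * v') ≤ (a + A)/4 := by
    by_contra hc
    apply h5
    constructor <;> linarith
  apply h7
  constructor <;> linarith

lemma raw_false {a A t d lam α β μ c₁ c₄ c₅ : ℝ} (h : NumHyp a A t d)
    (hlam0 : 0 ≤ lam) (hlam1 : lam ≤ 1/2) (hAC : A ≤ t + A * lam^2)
    (H : RawBad a A t d lam α β μ c₁ c₄ c₅) : False := by
  obtain ⟨-, h2 | ⟨h4, hL⟩ | ⟨h6, hL⟩⟩ := nonexc h _ _ _ _ rfl (bad_n1 h H)
  · exact exc2 h H h2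
  · exact exc4 h H h4 hL
  · exact exc6 h H hlam0 hlam1 hAC h6 hL

theorem thm5 (a A t lam h₄ h₅ a₂ a₃ a₄ a₅ d : ℝ) (m K : ℤ)
    (ha : 0 < a) (hA : 0 < A) (ht : 0 < t)
    (ha₂ : -1/2 < a₂ ∧ a₂ ≤ 1/2) (ha₃ : -1/2 < a₃ ∧ a₃ ≤ 1/2)
    (ha₄ : -1/2 < a₄ ∧ a₄ ≤ 1/2) (ha₅ : -1/2 < a₅ ∧ a₅ ≤ 1/2)
    (hh₄ : -1/2 < h₄ ∧ h₄ ≤ 1/2) (hh₅ : -1/2 < h₅ ∧ h₅ ≤ 1/2)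
    (hlam : 0 ≤ lam ∧ lam ≤ 1/2) (hAC : A ≤ t + A * lam^2)
    (hmin_le : ∀ u v w : ℤ, ¬(u = 0 ∧ v = 0 ∧ w = 0) →
      a ≤ redPhi a A t lam h₄ h₅ (u : ℝ) (v : ℝ) (w : ℝ))
    (hmin_eq : ∃ u v w : ℤ, ¬(u = 0 ∧ v = 0 ∧ w = 0) ∧
      redPhi a A t lam h₄ h₅ (u : ℝ) (v : ℝ) (w : ℝ) = a)
    (hd : d = ((8/3) * a * A * t) ^ ((1 : ℝ)/5))
    (hm : (m : ℝ) < d / a ∧ d / a ≤ (m : ℝ) + 1)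
    (hK : (K : ℝ) < (d + ((m : ℝ)^2 - 1) * a / 4) / A ∧
          (d + ((m : ℝ)^2 - 1) * a / 4) / A ≤ (K : ℝ) + 1)
    (ha' : a < 1/2) (hd1 : d ≤ 1) (had : a + d ≤ 1)
    (hmK : m = 2 ∧ K = 2)
    (c₁ c₂ c₃ c₄ c₅ : ℝ) (hc₂ : ∃ n : ℤ, (n : ℝ) = c₂) :
    ∃ x₁ x₂ x₃ x₄ x₅ : ℝ,
      (∃ k : ℤ, x₁ - c₁ = k) ∧ (∃ k : ℤ, x₂ - c₂ = k) ∧ (∃ k : ℤ, x₃ - c₃ = k) ∧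
      (∃ k : ℤ, x₄ - c₄ = k) ∧ (∃ k : ℤ, x₅ - c₅ = k) ∧
      0 < redQ a A t lam h₄ h₅ a₂ a₃ a₄ a₅ x₁ x₂ x₃ x₄ x₅ ∧
      redQ a A t lam h₄ h₅ a₂ a₃ a₄ a₅ x₁ x₂ x₃ x₄ x₅ < d := by
  obtain ⟨rfl, rfl⟩ := hmK
  obtain ⟨n₀, rfl⟩ := hc₂
  push_cast at hm hK
  have hd0 : 0 < d := by rw [hd]; positivity
  have hd5 : d^5 = 8/3 * a * A * t := by
    rw [hd, ← Real.rpow_natCast, ← Real.rpow_mul (by positivity)]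
    norm_num
  have h : NumHyp a A t d := by
    rw [lt_div_iff₀ ha, div_le_iff₀ ha] at hm
    rw [lt_div_iff₀ hA, div_le_iff₀ hA] at hK
    refine ⟨hd0, hd1, by linarith, by linarith, by linarith, by linarith, hd5, ?_⟩
    have : lam^2 ≤ (1/2)^2 := by have := hlam.1; have := hlam.2; gcongr
    nlinarith
  by_contra hno
  refine raw_false (α := a₂ + a₃^2/(4*a) + (a₄ - a₃*h₄)^2/(4*A))
    (β := a₅ - a₃*h₅ - (a₄ - a₃*h₄)*lam) (μ := (a₄ - a₃*h₄)/(2*A)) (c₁ := c₁) (c₄ := c₄)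
    (c₅ := c₅) h hlam.1 hlam.2 hAC ?_
  rintro n x₅ y ⟨k5, h5⟩ ⟨k4, hy⟩
  refine ⟨c₃ + h₄ * (c₄ + k4) + h₅ * x₅ - a₃ * n / (2 * a), ?_⟩
  rintro x₁ ⟨k1, h1⟩ k3 hh
  apply hno
  have e : redQ a A t lam h₄ h₅ a₂ a₃ a₄ a₅ x₁ n (c₃ + k3) (c₄ + k4) x₅
      = outerP t (a₂ + a₃^2/(4*a) + (a₄ - a₃*h₄)^2/(4*A))
        (a₅ - a₃*h₅ - (a₄ - a₃*h₄)*lam) n x₁ x₅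
        - a * (c₃ + h₄ * (c₄ + k4) + h₅ * x₅ - a₃ * n / (2 * a) + k3)^2 - A * y^2 := by
    rw [hy]
    unfold redQ redPhi outerP
    field_simp
    ring
  refine ⟨x₁, n, c₃ + k3, c₄ + k4, x₅, ⟨k1, by rw [h1]; ring⟩, ⟨n - n₀, by push_cast; ring⟩,
    ⟨k3, by ring⟩, ⟨k4, by ring⟩, ⟨k5, by rw [h5]; ring⟩, ?_⟩
  rw [e]
  exact hh
end
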